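/- arXiv:1003.3366 — 4 statements merged into one kernel-verified Lean document; each statement's English description precedes it below -/
import Mathlib

section
/- Let g ∈ C^∞(ℝ²) ∩ L^∞(ℝ²) and let u : [0,1] × [0,T] → ℝ be a smooth solution of the graph equation u_t = u_xx/(1 + u_x²) + g(x, u) √(1 + u_x²) with periodic-type boundary conditions. Let F(r) := r·arctan(r) − log √(1+r²). Then for every t ∈ (0,T), d/dt ∫₀¹ F(u_x(x,t)) dx = ∫₀¹ (−u_t² + g(x,u) u_t √(1 + u_x²)) dx ≤ (‖g‖_∞²/4) ∫₀¹ (1 + u_x²) dx. -/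
open Real MeasureTheory

noncomputable section

/-- partial derivative in the first (space) variable -/
def pdx (f : ℝ → ℝ → ℝ) : ℝ → ℝ → ℝ := fun x t => deriv (fun x' => f x' t) x

/-- partial derivative in the second (time) variable -/
def pdt (f : ℝ → ℝ → ℝ) : ℝ → ℝ → ℝ := fun x t => deriv (fun t' => f x t') t

/-- `u` is a smooth solution on `[0,1] × [0,T]` of the graph equation
`u_t = u_xx/(1+u_x²) + g(x,u)√(1+u_x²)` with periodic-type boundary conditions. -/
def IsGraphSol (g : ℝ → ℝ → ℝ) (T : ℝ) (u : ℝ → ℝ → ℝ) : Prop :=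
  ContDiff ℝ (⊤ : ℕ∞) (fun p : ℝ × ℝ => u p.1 p.2) ∧
  (∀ x ∈ Set.Icc (0:ℝ) 1, ∀ t ∈ Set.Icc 0 T,
    pdt u x t = pdx (pdx u) x t / (1 + (pdx u x t) ^ 2)
      + g x (u x t) * Real.sqrt (1 + (pdx u x t) ^ 2)) ∧
  (∀ t ∈ Set.Icc 0 T,
    u 0 t - u 0 0 = u 1 t - u 1 0 ∧ pdx u 0 t = pdx u 1 t)

/-- joint smoothness of a function of two variables -/
def SmoothTwo (f : ℝ → ℝ → ℝ) : Prop :=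
  ContDiff ℝ (⊤ : ℕ∞) (fun p : ℝ × ℝ => f p.1 p.2)

lemma SmoothTwo.hasFD {f : ℝ → ℝ → ℝ} (h : SmoothTwo f) (p : ℝ × ℝ) :
    HasFDerivAt (fun p : ℝ × ℝ => f p.1 p.2) (fderiv ℝ (fun p : ℝ × ℝ => f p.1 p.2) p) p :=
  (ContDiff.differentiable h (by simp) p).hasFDerivAt

lemma SmoothTwo.hasX {f : ℝ → ℝ → ℝ} (h : SmoothTwo f) (x t : ℝ) :
    HasDerivAt (fun x' => f x' t) (fderiv ℝ (fun p : ℝ × ℝ => f p.1 p.2) (x, t) (1, 0)) x :=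
  (h.hasFD (x, t)).comp_hasDerivAt x (f := fun x' => (x', t))
    ((hasDerivAt_id x).prodMk (hasDerivAt_const x t))

lemma SmoothTwo.hasT {f : ℝ → ℝ → ℝ} (h : SmoothTwo f) (x t : ℝ) :
    HasDerivAt (fun t' => f x t') (fderiv ℝ (fun p : ℝ × ℝ => f p.1 p.2) (x, t) (0, 1)) t :=
  (h.hasFD (x, t)).comp_hasDerivAt t (f := fun t' => (x, t'))
    ((hasDerivAt_const t x).prodMk (hasDerivAt_id t))

lemma SmoothTwo.pdx_eq {f : ℝ → ℝ → ℝ} (h : SmoothTwo f) (x t : ℝ) :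
    pdx f x t = fderiv ℝ (fun p : ℝ × ℝ => f p.1 p.2) (x, t) (1, 0) := (h.hasX x t).deriv

lemma SmoothTwo.pdt_eq {f : ℝ → ℝ → ℝ} (h : SmoothTwo f) (x t : ℝ) :
    pdt f x t = fderiv ℝ (fun p : ℝ × ℝ => f p.1 p.2) (x, t) (0, 1) := (h.hasT x t).deriv

lemma SmoothTwo.hasPdx {f : ℝ → ℝ → ℝ} (h : SmoothTwo f) (x t : ℝ) :
    HasDerivAt (fun x' => f x' t) (pdx f x t) x := by
  rw [h.pdx_eq]; exact h.hasX x t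

lemma SmoothTwo.hasPdt {f : ℝ → ℝ → ℝ} (h : SmoothTwo f) (x t : ℝ) :
    HasDerivAt (fun t' => f x t') (pdt f x t) t := by
  rw [h.pdt_eq]; exact h.hasT x t

lemma SmoothTwo.fd {f : ℝ → ℝ → ℝ} (h : SmoothTwo f) :
    ContDiff ℝ (⊤ : ℕ∞) (fderiv ℝ (fun p : ℝ × ℝ => f p.1 p.2)) :=
  ContDiff.fderiv_right h (by simp)

lemma SmoothTwo.pdx {f : ℝ → ℝ → ℝ} (h : SmoothTwo f) : SmoothTwo (pdx f) := by
  have : (fun p : ℝ × ℝ => _root_.pdx f p.1 p.2)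
      = fun p => fderiv ℝ (fun p : ℝ × ℝ => f p.1 p.2) p (1, 0) := by
    funext p; exact h.pdx_eq p.1 p.2
  unfold SmoothTwo
  rw [this]
  exact h.fd.clm_apply contDiff_const

lemma SmoothTwo.pdt {f : ℝ → ℝ → ℝ} (h : SmoothTwo f) : SmoothTwo (pdt f) := by
  have : (fun p : ℝ × ℝ => _root_.pdt f p.1 p.2)
      = fun p => fderiv ℝ (fun p : ℝ × ℝ => f p.1 p.2) p (0, 1) := by
    funext p; exact h.pdt_eq p.1 p.2
  unfold SmoothTwo
  rw [this]
  exact h.fd.clm_apply contDiff_const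

lemma SmoothTwo.cont {f : ℝ → ℝ → ℝ} (h : SmoothTwo f) :
    Continuous (fun p : ℝ × ℝ => f p.1 p.2) := ContDiff.continuous h

lemma SmoothTwo.contX {f : ℝ → ℝ → ℝ} (h : SmoothTwo f) (t : ℝ) :
    Continuous (fun x => f x t) :=
  h.cont.comp (by fun_prop : Continuous fun x : ℝ => (x, t))

lemma SmoothTwo.mixed {f : ℝ → ℝ → ℝ} (h : SmoothTwo f) (x t : ℝ) :
    _root_.pdt (_root_.pdx f) x t = _root_.pdx (_root_.pdt f) x t := by
  have hd := (h.fd.differentiable (by simp) (x, t)).hasFDerivAt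
  have hx : (fun p : ℝ × ℝ => _root_.pdx f p.1 p.2)
      = fun p => fderiv ℝ (fun p : ℝ × ℝ => f p.1 p.2) p (1, 0) := by
    funext p; exact h.pdx_eq p.1 p.2
  have ht : (fun p : ℝ × ℝ => _root_.pdt f p.1 p.2)
      = fun p => fderiv ℝ (fun p : ℝ × ℝ => f p.1 p.2) p (0, 1) := by
    funext p; exact h.pdt_eq p.1 p.2
  rw [h.pdx.pdt_eq, h.pdt.pdx_eq, hx, ht,
    (hd.clm_apply (hasFDerivAt_const ((1 : ℝ), (0 : ℝ)) (x, t))).fderiv,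
    (hd.clm_apply (hasFDerivAt_const ((0 : ℝ), (1 : ℝ)) (x, t))).fderiv]
  simpa using second_derivative_symmetric h.hasFD hd (0, 1) (1, 0)

lemma hasDerivAt_F (r : ℝ) :
    HasDerivAt (fun r : ℝ => r * Real.arctan r - Real.log (Real.sqrt (1 + r ^ 2)))
      (Real.arctan r) r := by
  have hp : (0 : ℝ) < 1 + r ^ 2 := by positivity
  have e : (fun r : ℝ => r * Real.arctan r - Real.log (Real.sqrt (1 + r ^ 2)))
      = fun r : ℝ => r * Real.arctan r - Real.log (1 + r ^ 2) / 2 := by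
    funext r
    rw [Real.log_sqrt (by positivity)]
  rw [e]
  have h1 := (hasDerivAt_id r).mul (Real.hasDerivAt_arctan r)
  have h2 := (((hasDerivAt_pow 2 r).const_add 1).log hp.ne').div_const 2
  refine (h1.sub h2).congr_deriv ?_
  simp only [id]
  field_simp
  push_cast
  ring

/-- differentiation under the integral sign -/
lemma hasDerivAt_int {G G' : ℝ → ℝ → ℝ} (hG : Continuous fun p : ℝ × ℝ => G p.1 p.2)
    (hG' : Continuous fun p : ℝ × ℝ => G' p.1 p.2)
    (hd : ∀ x t, HasDerivAt (fun t' => G x t') (G' x t) t) (t : ℝ) :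
    HasDerivAt (fun t' => ∫ x in (0:ℝ)..1, G x t') (∫ x in (0:ℝ)..1, G' x t) t := by
  obtain ⟨C, hC⟩ := ((isCompact_Icc (a := (0:ℝ)) (b := 1)).prod
    (isCompact_Icc (a := t - 1) (b := t + 1))).exists_bound_of_continuousOn hG'.continuousOn
  have cG : ∀ s, Continuous fun x => G x s := fun s =>
    hG.comp (by fun_prop : Continuous fun x : ℝ => (x, s))
  have cG' : ∀ s, Continuous fun x => G' x s := fun s =>
    hG'.comp (by fun_prop : Continuous fun x : ℝ => (x, s))
  refine (intervalIntegral.hasDerivAt_integral_of_dominated_loc_of_deriv_le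
    (F := fun s x => G x s) (F' := fun s x => G' x s) (bound := fun _ => C)
    (s := Set.Icc (t - 1) (t + 1)) (Icc_mem_nhds (by linarith) (by linarith))
    (Filter.Eventually.of_forall fun s => (cG s).aestronglyMeasurable)
    ((cG t).intervalIntegrable _ _) (cG' t).aestronglyMeasurable
    (Filter.Eventually.of_forall fun x hx s hs => ?_)
    (continuous_const.intervalIntegrable _ _)
    (Filter.Eventually.of_forall fun x _ s _ => hd x s)).2
  rw [Set.uIoc_of_le zero_le_one] at hx
  exact hC (x, s) ⟨⟨hx.1.le, hx.2⟩, hs⟩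

theorem statement12 (g : ℝ → ℝ → ℝ)
    (hg : ContDiff ℝ (⊤ : ℕ∞) (fun p : ℝ × ℝ => g p.1 p.2))
    (M : ℝ) (hM : ∀ a b, |g a b| ≤ M)
    (T : ℝ) (hT : 0 < T) (u : ℝ → ℝ → ℝ) (hu : IsGraphSol g T u) :
    ∀ t ∈ Set.Ioo 0 T,
      HasDerivAt (fun t' => ∫ x in (0:ℝ)..1,
          (pdx u x t' * Real.arctan (pdx u x t')
            - Real.log (Real.sqrt (1 + (pdx u x t') ^ 2))))
        (∫ x in (0:ℝ)..1,
          (-(pdt u x t) ^ 2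
            + g x (u x t) * pdt u x t * Real.sqrt (1 + (pdx u x t) ^ 2))) t ∧
      (∫ x in (0:ℝ)..1,
          (-(pdt u x t) ^ 2
            + g x (u x t) * pdt u x t * Real.sqrt (1 + (pdx u x t) ^ 2)))
        ≤ M ^ 2 / 4 * ∫ x in (0:ℝ)..1, (1 + (pdx u x t) ^ 2) := by
  intro t ht
  obtain ⟨hs, hpde, hbc⟩ := hu
  replace hs : SmoothTwo u := hs
  replace hg : SmoothTwo g := hg
  have htI : t ∈ Set.Icc 0 T := ⟨ht.1.le, ht.2.le⟩
  have cux := hs.pdx.contX t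
  have cuxx := hs.pdx.pdx.contX t
  have cut := hs.pdt.contX t
  have cuxt := hs.pdt.pdx.contX t
  have cg : Continuous fun x => g x (u x t) :=
    hg.cont.comp (continuous_id.prodMk (hs.contX t))
  have cI : Continuous fun x => -(pdt u x t) ^ 2
      + g x (u x t) * pdt u x t * Real.sqrt (1 + (pdx u x t) ^ 2) :=
    (cut.pow 2).neg.add ((cg.mul cut).mul (Real.continuous_sqrt.comp (by fun_prop)))
  have hpos : ∀ x, (0 : ℝ) < 1 + (pdx u x t) ^ 2 := fun x => by positivity
  constructor
  · have c1 := hs.pdx.cont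
    have c2 := hs.pdx.pdt.cont
    have key := hasDerivAt_int
      (G := fun x s => pdx u x s * Real.arctan (pdx u x s)
            - Real.log (Real.sqrt (1 + (pdx u x s) ^ 2)))
      (G' := fun x s => Real.arctan (pdx u x s) * pdt (pdx u) x s)
      ((continuous_iff_continuousAt.2 fun r => (hasDerivAt_F r).continuousAt).comp c1)
      ((Real.continuous_arctan.comp c1).mul c2)
      (fun x s => (hasDerivAt_F (pdx u x s)).comp s (hs.pdx.hasPdt x s)) t
    refine key.congr_deriv ?_
    have hb : pdt u 0 t = pdt u 1 t := by
      have e : (fun s => u 0 s) =ᶠ[nhds t] fun s => u 1 s + (u 0 0 - u 1 0) := by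
        filter_upwards [Icc_mem_nhds ht.1 ht.2] with s hs'
        linarith [(hbc s hs').1]
      exact (((hs.hasPdt 1 t).add_const _).congr_of_eventuallyEq e).unique (hs.hasPdt 0 t) |>.symm
    have ibp := intervalIntegral.integral_mul_deriv_eq_deriv_mul (a := 0) (b := 1)
      (u := fun x => Real.arctan (pdx u x t)) (v := fun x => pdt u x t)
      (u' := fun x => 1 / (1 + (pdx u x t) ^ 2) * pdx (pdx u) x t)
      (v' := fun x => pdx (pdt u) x t)
      (fun x _ => (hs.pdx.hasPdx x t).arctan)
      (fun x _ => hs.pdt.hasPdx x t)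
      (Continuous.intervalIntegrable
        ((continuous_const.div (by fun_prop) fun x => (hpos x).ne').mul cuxx) _ _)
      (cuxt.intervalIntegrable _ _)
    simp only [hs.mixed]
    rw [ibp, hb, (hbc t htI).2, sub_self, zero_sub, ← intervalIntegral.integral_neg]
    refine intervalIntegral.integral_congr fun x hx => ?_
    rw [Set.uIcc_of_le zero_le_one] at hx
    have h := hpde x hx t htI
    have h' : 1 / (1 + (pdx u x t) ^ 2) * pdx (pdx u) x t
        = pdt u x t - g x (u x t) * Real.sqrt (1 + (pdx u x t) ^ 2) := by
      rw [h]; ring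
    simp only [h']
    ring
  · rw [← intervalIntegral.integral_const_mul]
    refine intervalIntegral.integral_mono_on zero_le_one (cI.intervalIntegrable _ _)
      (Continuous.intervalIntegrable (by fun_prop) _ _) fun x _ => ?_
    have h1 : g x (u x t) ^ 2 ≤ M ^ 2 := sq_le_sq' (abs_le.1 (hM _ _)).1 (abs_le.1 (hM _ _)).2
    have h2 := Real.sq_sqrt (hpos x).le
    have h3 := mul_le_mul_of_nonneg_right h1 (hpos x).le
    nlinarith [sq_nonneg (pdt u x t - g x (u x t) * Real.sqrt (1 + (pdx u x t) ^ 2) / 2)]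
end
end

section
/- Let g ∈ C^∞(ℝ²) ∩ L^∞(ℝ²) and let u : [0,1] × [0,T] → ℝ be a smooth solution of the graph equation u_t = u_xx/(1 + u_x²) + g(x, u) √(1 + u_x²) with periodic-type boundary conditions. Then there exists a constant C > 0, depending only on ‖g‖_∞, such that for every t ∈ (0,T): d/dt ∫₀¹ (1 + u_x(x,t)²)^{3/2} dx ≤ C + C (∫₀¹ (1 + u_x(x,t)²)^{3/2} dx)³. -/
open Real MeasureTheory

noncomputable section

open Set Topology

lemma osc_aux (p w : ℝ → ℝ) (hp : ∀ x, HasDerivAt p (w x) x) (hw : Continuous w)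
    (h : ℝ → ℝ) (hh : Continuous h) (hle : ∀ x, |2 * p x * w x| ≤ h x)
    (x y : ℝ) (hx : x ∈ Icc (0:ℝ) 1) (hy : y ∈ Icc (0:ℝ) 1) :
    p x ^ 2 - p y ^ 2 ≤ ∫ z in (0:ℝ)..1, h z := by
  have hpc : Continuous p := continuous_iff_continuousAt.2 fun x => (hp x).continuousAt
  have e : ∫ z in y..x, 2 * p z * w z = p x ^ 2 - p y ^ 2 := by
    apply intervalIntegral.integral_eq_sub_of_hasDerivAt
    · intro z _
      have := (hp z).fun_pow 2
      refine this.congr_deriv ?_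
      push_cast; ring
    · exact Continuous.intervalIntegrable (by fun_prop) _ _
  have hn : ∀ z, 0 ≤ h z := fun z => (abs_nonneg _).trans (hle z)
  have h1 : ‖∫ z in y..x, 2 * p z * w z‖ ≤ |∫ z in y..x, h z| := by
    apply intervalIntegral.norm_integral_le_abs_of_norm_le
    · exact Filter.Eventually.of_forall fun z => hle z
    · exact hh.intervalIntegrable _ _
  have h2 : |∫ z in y..x, h z| ≤ |∫ z in (0:ℝ)..1, h z| := by
    apply intervalIntegral.abs_integral_mono_interval
    · rw [uIoc_of_le zero_le_one, uIoc]
      exact Ioc_subset_Ioc (le_min hy.1 hx.1) (max_le hy.2 hx.2)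
    · exact Filter.Eventually.of_forall hn
    · exact hh.intervalIntegrable _ _
  rw [abs_of_nonneg (intervalIntegral.integral_nonneg zero_le_one fun z _ => hn z)] at h2
  rw [e] at h1
  exact (le_abs_self _).trans (h1.trans h2)

lemma pt_aux (p w v q M : ℝ) (hv : 1 ≤ v) (hv2 : v ^ 2 = 1 + p ^ 2)
    (hq : |q - w / v ^ 2| ≤ M * v) (hM : 0 ≤ M) :
    -(3 * (w * (1 + 2 * p ^ 2) / v) * q) ≤
      -(3 / 2) * (w ^ 2 / v) + 3 * (M ^ 2 + 1) * v ^ 5 := by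
  have hv0 : 0 < v := by linarith
  obtain ⟨r, hr⟩ : ∃ r, r = q - w / v ^ 2 := ⟨_, rfl⟩
  rw [← hr] at hq
  have hqe : q = r + w / v ^ 2 := by rw [hr]; ring
  have hr2 : r ^ 2 ≤ M ^ 2 * v ^ 2 := by
    have := sq_le_sq' (by linarith [(abs_le.1 hq).1]) (abs_le.1 hq).2
    nlinarith
  -- pointwise Young
  have key : -(w / v * q) ≤ -(1 / 2) * (w ^ 2 / v ^ 3) + (M ^ 2 / 2) * v ^ 3 := by
    have y : -(w / v * r) ≤ (1/2) * (w ^ 2 / v ^ 3) + (1 / 2) * (r ^ 2 * v) := by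
      have : (1/2) * (w ^ 2 / v ^ 3) + (1 / 2) * (r ^ 2 * v) + w / v * r
          = (1/2) * ((w / v ^ 2 + r) ^ 2 * v) := by field_simp; ring
      have : 0 ≤ (1/2) * ((w / v ^ 2 + r) ^ 2 * v) := by positivity
      linarith
    have y2 : r ^ 2 * v ≤ M ^ 2 * v ^ 3 := by nlinarith
    have : w / v * q = w / v * r + w ^ 2 / v ^ 3 := by rw [hqe]; field_simp
    linarith
  have c1 : v ^ 2 ≤ 1 + 2 * p ^ 2 := by nlinarith [sq_nonneg p]
  have c2 : 1 + 2 * p ^ 2 ≤ 2 * v ^ 2 := by nlinarith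
  have a1 : w ^ 2 / v ≤ (1 + 2 * p ^ 2) * (w ^ 2 / v ^ 3) := by
    have : w ^ 2 / v = v ^ 2 * (w ^ 2 / v ^ 3) := by field_simp
    rw [this]; gcongr
  have a2 : (1 + 2 * p ^ 2) * ((M ^ 2 / 2) * v ^ 3) ≤ M ^ 2 * v ^ 5 := by
    calc _ ≤ (2 * v ^ 2) * ((M ^ 2 / 2) * v ^ 3) := by gcongr
      _ = _ := by ring
  have a3 := mul_le_mul_of_nonneg_left key (by positivity : 0 ≤ 1 + 2 * p ^ 2)
  have e : -(3 * (w * (1 + 2 * p ^ 2) / v) * q) = 3 * ((1 + 2 * p ^ 2) * -(w / v * q)) := by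
    ring
  have : 0 ≤ M ^ 2 * v ^ 5 := by positivity
  have : 0 ≤ v ^ 5 := by positivity
  rw [e]
  nlinarith

lemma hasDerivAt_vv (p : ℝ → ℝ) (w x : ℝ) (hp : HasDerivAt p w x) :
    HasDerivAt (fun x => √(1 + p x ^ 2)) (p x * w / √(1 + p x ^ 2)) x := by
  have h := ((hp.fun_pow 2).const_add 1).sqrt (by positivity)
  refine h.congr_deriv ?_
  have : √(1 + p x ^ 2) ≠ 0 := (Real.sqrt_pos.2 (by positivity)).ne'
  push_cast
  field_simp

lemma space_aux (M : ℝ) (hM : 0 ≤ M) (p w q q' : ℝ → ℝ) (hp : ∀ x, HasDerivAt p (w x) x)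
    (hw : Continuous w) (hq : ∀ x, HasDerivAt q (q' x) x) (hq' : Continuous q')
    (hp01 : p 0 = p 1) (hq01 : q 0 = q 1)
    (heq : ∀ x ∈ Icc (0:ℝ) 1, |q x - w x / √(1 + p x ^ 2) ^ 2| ≤ M * √(1 + p x ^ 2)) :
    ∫ x in (0:ℝ)..1, (3 * (√(1 + p x ^ 2) * p x)) * q' x ≤
      3 * (M ^ 2 + 1) * (∫ x in (0:ℝ)..1, √(1 + p x ^ 2) ^ 3) ^ 2
        + 6 * (M ^ 2 + 1) ^ 2 * (∫ x in (0:ℝ)..1, √(1 + p x ^ 2) ^ 3) ^ 3 := by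
  have hpc : Continuous p := continuous_iff_continuousAt.2 fun x => (hp x).continuousAt
  have hqc : Continuous q := continuous_iff_continuousAt.2 fun x => (hq x).continuousAt
  obtain ⟨v, hv⟩ : ∃ v : ℝ → ℝ, v = fun x => √(1 + p x ^ 2) := ⟨_, rfl⟩
  have hvx : ∀ x, √(1 + p x ^ 2) = v x := fun x => by rw [hv]
  simp only [hvx] at heq ⊢
  have hv2 : ∀ x, v x ^ 2 = 1 + p x ^ 2 := fun x => by
    rw [hv]; exact Real.sq_sqrt (by positivity)
  have hv1 : ∀ x, 1 ≤ v x := fun x => by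
    rw [hv]; exact Real.one_le_sqrt.2 (by nlinarith [sq_nonneg (p x)])
  have hv0 : ∀ x, 0 < v x := fun x => by linarith [hv1 x]
  have hvn : ∀ x, v x ≠ 0 := fun x => (hv0 x).ne'
  have hvd : ∀ x, HasDerivAt v (p x * w x / v x) x := fun x => by
    have := hasDerivAt_vv p (w x) x (hp x)
    rw [hv]; exact this
  have hvc : Continuous v := continuous_iff_continuousAt.2 fun x => (hvd x).continuousAt
  have hA0 : Continuous fun x => w x ^ 2 / v x := by fun_prop (disch := assumption)
  -- integration by parts
  have ibp : ∫ x in (0:ℝ)..1, (3 * (v x * p x)) * q' x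
      = ∫ x in (0:ℝ)..1, -(3 * (w x * (1 + 2 * p x ^ 2) / v x) * q x) := by
    have := intervalIntegral.integral_mul_deriv_eq_deriv_mul (a := 0) (b := 1)
      (u := fun x => 3 * (v x * p x)) (v := q) (v' := q')
      (u' := fun x => 3 * (w x * (1 + 2 * p x ^ 2) / v x))
      (fun x _ => by
        have := ((hvd x).fun_mul (hp x)).const_mul 3
        refine this.congr_deriv ?_
        have := hv2 x
        have := hvn x
        field_simp
        rw [hv2]; ring)
      (fun x _ => hq x)
      (Continuous.intervalIntegrable (by fun_prop (disch := assumption)) _ _)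
      (Continuous.intervalIntegrable (by fun_prop) _ _)
    rw [this, intervalIntegral.integral_neg]
    have : v 0 = v 1 := by rw [hv]; simp [hp01]
    rw [this, hp01, hq01]; ring
  obtain ⟨I, hI⟩ : ∃ I, I = ∫ x in (0:ℝ)..1, v x ^ 3 := ⟨_, rfl⟩
  obtain ⟨A, hA⟩ : ∃ A, A = ∫ x in (0:ℝ)..1, w x ^ 2 / v x := ⟨_, rfl⟩
  obtain ⟨K, hK⟩ : ∃ K, K = M ^ 2 + 1 := ⟨_, rfl⟩
  have hK0 : 0 < K := by rw [hK]; positivity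
  have hI1 : 1 ≤ I := by
    have : ∫ x in (0:ℝ)..1, (1:ℝ) ≤ I := by
      rw [hI]
      apply intervalIntegral.integral_mono_on zero_le_one (by simp)
        (Continuous.intervalIntegrable (by fun_prop) _ _)
      intro x _
      exact one_le_pow₀ (hv1 x)
    simpa using this
  have s1 : ∫ x in (0:ℝ)..1, (3 * (v x * p x)) * q' x
      ≤ -(3/2) * A + 3 * K * ∫ x in (0:ℝ)..1, v x ^ 5 := by
    rw [ibp, hA, ← intervalIntegral.integral_const_mul, ← intervalIntegral.integral_const_mul,
      ← intervalIntegral.integral_add (Continuous.intervalIntegrable (by fun_prop) _ _)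
        (Continuous.intervalIntegrable (by fun_prop) _ _)]
    apply intervalIntegral.integral_mono_on zero_le_one
      (Continuous.intervalIntegrable (by fun_prop (disch := assumption)) _ _)
      (Continuous.intervalIntegrable (by fun_prop) _ _)
    intro x hx
    rw [hK]
    exact pt_aux _ _ _ _ _ (hv1 x) (hv2 x) (heq x hx) hM
  obtain ⟨d, hd⟩ : ∃ d, d = 1 / (2 * K * I) := ⟨_, rfl⟩
  have hd0 : 0 < d := by rw [hd]; positivity
  have hint : ∫ x in (0:ℝ)..1, (d * (w x ^ 2 / v x) + d⁻¹ * v x ^ 3) = d * A + d⁻¹ * I := by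
    rw [intervalIntegral.integral_add (Continuous.intervalIntegrable (by fun_prop) _ _)
        (Continuous.intervalIntegrable (by fun_prop) _ _), intervalIntegral.integral_const_mul,
        intervalIntegral.integral_const_mul, hA, hI]
  have osc : ∀ x ∈ Icc (0:ℝ) 1, ∀ y ∈ Icc (0:ℝ) 1, v x ^ 2 ≤ v y ^ 2 + (d * A + d⁻¹ * I) := by
    intro x hx y hy
    have := osc_aux p w hp hw (fun x => d * (w x ^ 2 / v x) + d⁻¹ * v x ^ 3)
      (by fun_prop) (fun z => by
        have hz := hv0 z
        have hpz : |p z| ≤ v z := abs_le_of_sq_le_sq (by rw [hv2]; linarith) hz.le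
        rw [abs_mul, abs_mul, abs_two]
        have h1 : 2 * |p z| * |w z| ≤ 2 * v z * |w z| := by gcongr
        have h2 : 0 ≤ (d * |w z| - v z ^ 2) ^ 2 / (d * v z) := by positivity
        have h3 : (d * |w z| - v z ^ 2) ^ 2 / (d * v z)
          = d * (|w z| ^ 2 / v z) + d⁻¹ * v z ^ 3 - 2 * v z * |w z| := by
          field_simp
          ring
        rw [sq_abs] at h3
        linarith) x y hx hy
    rw [hint] at this
    rw [hv2, hv2]; linarith
  have sup : ∀ x ∈ Icc (0:ℝ) 1, v x ^ 2 ≤ I + (d * A + d⁻¹ * I) := by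
    intro x hx
    have h1 : ∫ y in (0:ℝ)..1, v x ^ 2 ≤ ∫ y in (0:ℝ)..1, (v y ^ 3 + (d * A + d⁻¹ * I)) := by
      apply intervalIntegral.integral_mono_on zero_le_one (by simp)
        (Continuous.intervalIntegrable (by fun_prop) _ _)
      intro y hy
      refine (osc x hx y hy).trans ?_
      have : v y ^ 2 ≤ v y ^ 3 := pow_le_pow_right₀ (hv1 y) (by norm_num)
      linarith
    rw [intervalIntegral.integral_add (Continuous.intervalIntegrable (by fun_prop) _ _) (by simp),
      ← hI] at h1
    simpa using h1
  have s2 : ∫ x in (0:ℝ)..1, v x ^ 5 ≤ (I + (d * A + d⁻¹ * I)) * I := by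
    rw [show (I + (d * A + d⁻¹ * I)) * I =
      ∫ x in (0:ℝ)..1, (I + (d * A + d⁻¹ * I)) * v x ^ 3 by
        rw [intervalIntegral.integral_const_mul, ← hI]]
    apply intervalIntegral.integral_mono_on zero_le_one
      (Continuous.intervalIntegrable (by fun_prop) _ _)
      (Continuous.intervalIntegrable (by fun_prop) _ _)
    intro x hx
    have := mul_le_mul_of_nonneg_right (sup x hx) (pow_pos (hv0 x) 3).le
    calc _ = v x ^ 2 * v x ^ 3 := by ring
      _ ≤ _ := this
  rw [← hI, ← hK]
  refine s1.trans ?_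
  have s3 := mul_le_mul_of_nonneg_left s2 (by positivity : 0 ≤ 3 * K)
  have s4 : 3 * K * ((I + (d * A + d⁻¹ * I)) * I)
      = 3 * K * I ^ 2 + (3 / 2) * A + 6 * K ^ 2 * I ^ 3 := by
    rw [hd]; field_simp; ring
  linarith

/-- derivative under the integral sign -/
lemma time_aux (F F' : ℝ → ℝ → ℝ) (hF : Continuous fun z : ℝ × ℝ => F z.1 z.2)
    (hF' : Continuous fun z : ℝ × ℝ => F' z.1 z.2)
    (hd : ∀ x t, HasDerivAt (fun t => F x t) (F' x t) t) (t : ℝ) :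
    HasDerivAt (fun t => ∫ x in (0:ℝ)..1, F x t) (∫ x in (0:ℝ)..1, F' x t) t := by
  obtain ⟨B, hB⟩ := ((isCompact_Icc (a := (0:ℝ)) (b := 1)).prod
    (isCompact_Icc (a := t - 1) (b := t + 1))).exists_bound_of_continuousOn hF'.continuousOn
  have c1 : ∀ s, Continuous fun x => F x s := fun s =>
    hF.comp (Continuous.prodMk continuous_id continuous_const)
  have c2 : ∀ s, Continuous fun x => F' x s := fun s =>
    hF'.comp (Continuous.prodMk continuous_id continuous_const)
  refine (intervalIntegral.hasDerivAt_integral_of_dominated_loc_of_deriv_le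
    (F := fun t x => F x t) (F' := fun t x => F' x t) (bound := fun _ => B)
    (s := Icc (t - 1) (t + 1)) (Icc_mem_nhds (by linarith) (by linarith)) ?_ ?_ ?_ ?_ ?_ ?_).2
  · exact Filter.Eventually.of_forall fun s => (c1 s).aestronglyMeasurable
  · exact (c1 t).intervalIntegrable _ _
  · exact (c2 t).aestronglyMeasurable
  · refine Filter.Eventually.of_forall fun x hx s hs => ?_
    rw [uIoc_of_le zero_le_one] at hx
    exact hB (x, s) ⟨Ioc_subset_Icc_self hx, hs⟩
  · simp
  · exact Filter.Eventually.of_forall fun x _ s _ => hd x s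

lemma slice_x (f : ℝ × ℝ → ℝ) (hf : Differentiable ℝ f) (x t : ℝ) :
    HasDerivAt (fun x => f (x, t)) (fderiv ℝ f (x, t) (1, 0)) x := by
  have h := (hf (x, t)).hasFDerivAt
  exact h.comp_hasDerivAt x ((hasDerivAt_id x).prodMk (hasDerivAt_const x t))

lemma slice_t (f : ℝ × ℝ → ℝ) (hf : Differentiable ℝ f) (x t : ℝ) :
    HasDerivAt (fun t => f (x, t)) (fderiv ℝ f (x, t) (0, 1)) t := by
  have h := (hf (x, t)).hasFDerivAt
  exact h.comp_hasDerivAt t ((hasDerivAt_const t x).prodMk (hasDerivAt_id t))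

lemma smooth_dir (f : ℝ × ℝ → ℝ) (hf : ContDiff ℝ (⊤ : ℕ∞) f) (e : ℝ × ℝ) :
    ContDiff ℝ (⊤ : ℕ∞) (fun z => fderiv ℝ f z e) :=
  (hf.fderiv_right (m := (⊤ : ℕ∞)) (by simp)).clm_apply contDiff_const

lemma dir_dir (f : ℝ × ℝ → ℝ) (hf : ContDiff ℝ (⊤ : ℕ∞) f) (e e' z : ℝ × ℝ) :
    fderiv ℝ (fun z => fderiv ℝ f z e) z e' = fderiv ℝ (fderiv ℝ f) z e' e := by
  have h : DifferentiableAt ℝ (fderiv ℝ f) z :=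
    (hf.fderiv_right (m := (⊤ : ℕ∞)) (by simp)).differentiable (by simp) z
  rw [fderiv_clm_apply h (differentiableAt_const e)]
  simp

lemma dir_comm (f : ℝ × ℝ → ℝ) (hf : ContDiff ℝ (⊤ : ℕ∞) f) (e e' z : ℝ × ℝ) :
    fderiv ℝ (fun z => fderiv ℝ f z e) z e' = fderiv ℝ (fun z => fderiv ℝ f z e') z e := by
  rw [dir_dir f hf, dir_dir f hf]
  exact (hf.contDiffAt.isSymmSndFDerivAt (by
    rw [minSmoothness_of_isRCLikeNormedField]; exact WithTop.coe_le_coe.2 le_top)).eq _ _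

theorem statement13 :
    ∃ C : ℝ → ℝ, (∀ M, 0 < C M) ∧
      ∀ g : ℝ → ℝ → ℝ, ContDiff ℝ (⊤ : ℕ∞) (fun p : ℝ × ℝ => g p.1 p.2) →
      ∀ M : ℝ, (∀ a b, |g a b| ≤ M) →
      ∀ T : ℝ, 0 < T → ∀ u : ℝ → ℝ → ℝ, IsGraphSol g T u →
      ∀ t ∈ Set.Ioo 0 T, ∃ D : ℝ,
        HasDerivAt (fun t' => ∫ x in (0:ℝ)..1, Real.sqrt (1 + (pdx u x t') ^ 2) ^ 3) D t ∧
        D ≤ C M + C M * (∫ x in (0:ℝ)..1, Real.sqrt (1 + (pdx u x t) ^ 2) ^ 3) ^ 3 := by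
  refine ⟨fun M => 3 * (M ^ 2 + 1) + 6 * (M ^ 2 + 1) ^ 2, fun M => by positivity, ?_⟩
  intro g _ M hgM T _ u ⟨hu, hpde, hbc⟩ t ht
  have hM : 0 ≤ M := (abs_nonneg _).trans (hgM 0 0)
  obtain ⟨U, hU⟩ : ∃ U : ℝ × ℝ → ℝ, U = fun p => u p.1 p.2 := ⟨_, rfl⟩
  rw [← hU] at hu
  have huU : ∀ x t, u x t = U (x, t) := fun x t => by rw [hU]
  obtain ⟨P, hP⟩ : ∃ P : ℝ × ℝ → ℝ, P = fun z => fderiv ℝ U z (1, 0) := ⟨_, rfl⟩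
  obtain ⟨Q, hQ⟩ : ∃ Q : ℝ × ℝ → ℝ, Q = fun z => fderiv ℝ U z (0, 1) := ⟨_, rfl⟩
  have sP : ContDiff ℝ (⊤ : ℕ∞) P := by rw [hP]; exact smooth_dir U hu _
  have sQ : ContDiff ℝ (⊤ : ℕ∞) Q := by rw [hQ]; exact smooth_dir U hu _
  have dU : Differentiable ℝ U := hu.differentiable (by simp)
  have dP : Differentiable ℝ P := sP.differentiable (by simp)
  have dQ : Differentiable ℝ Q := sQ.differentiable (by simp)
  have eP : ∀ x t, pdx u x t = P (x, t) := fun x t => by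
    have := (slice_x U dU x t).deriv
    simp only [pdx, huU, this, hP]
  have eQ : ∀ x t, pdt u x t = Q (x, t) := fun x t => by
    have := (slice_t U dU x t).deriv
    simp only [pdt, huU, this, hQ]
  have eW : ∀ x t, pdx (pdx u) x t = fderiv ℝ P (x, t) (1, 0) := fun x t => by
    have := (slice_x P dP x t).deriv
    rw [pdx]
    simp only [eP, this]
  have comm : ∀ z, fderiv ℝ P z (0, 1) = fderiv ℝ Q z (1, 0) := fun z => by
    rw [hP, hQ]; exact dir_comm U hu _ _ z
  have cP : Continuous P := sP.continuous
  have cW : Continuous fun z => fderiv ℝ P z (1, 0) := (smooth_dir P sP _).continuous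
  have cQ' : Continuous fun z => fderiv ℝ Q z (1, 0) := (smooth_dir Q sQ _).continuous
  simp only [eP]
  refine ⟨∫ x in (0:ℝ)..1, (3 * (√(1 + P (x, t) ^ 2) * P (x, t))) * fderiv ℝ Q (x, t) (1, 0),
    ?_, ?_⟩
  · apply time_aux (fun x t => √(1 + P (x, t) ^ 2) ^ 3)
      (fun x t => (3 * (√(1 + P (x, t) ^ 2) * P (x, t))) * fderiv ℝ Q (x, t) (1, 0))
    · fun_prop
    · fun_prop
    · intro x s
      have h := slice_t P dP x s
      rw [comm] at h
      have h2 := (hasDerivAt_vv (fun t => P (x, t)) _ s h).fun_pow 3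
      refine h2.congr_deriv ?_
      have : √(1 + P (x, s) ^ 2) ≠ 0 := (Real.sqrt_pos.2 (by positivity)).ne'
      push_cast
      field_simp
  · have htI : t ∈ Icc 0 T := Ioo_subset_Icc_self ht
    have hQ01 : Q (0, t) = Q (1, t) := by
      have h0 := slice_t U dU 0 t
      have h1 := (slice_t U dU 1 t).sub_const (u 1 0 - u 0 0)
      have : (fun t => U (0, t)) =ᶠ[𝓝 t] fun t => U (1, t) - (u 1 0 - u 0 0) := by
        filter_upwards [Icc_mem_nhds ht.1 ht.2] with s hs
        have := (hbc s hs).1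
        rw [← huU, ← huU]; linarith
      have := (h1.congr_of_eventuallyEq this).unique h0
      rw [hQ]; exact this.symm
    have hP01 : P (0, t) = P (1, t) := by
      rw [← eP, ← eP]; exact (hbc t htI).2
    have main := space_aux M hM (fun x => P (x, t)) (fun x => fderiv ℝ P (x, t) (1, 0))
      (fun x => Q (x, t)) (fun x => fderiv ℝ Q (x, t) (1, 0)) (fun x => slice_x P dP x t)
      (by fun_prop) (fun x => slice_x Q dQ x t) (by fun_prop) hP01 hQ01 (by
        intro x hx
        have := hpde x hx t htI
        rw [eQ, eW, eP] at this
        rw [this, Real.sq_sqrt (by positivity), add_sub_cancel_left, abs_mul,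
          abs_of_nonneg (Real.sqrt_nonneg _)]
        exact mul_le_mul_of_nonneg_right (hgM _ _) (Real.sqrt_nonneg _))
    refine main.trans ?_
    obtain ⟨I, hI⟩ : ∃ I, I = ∫ x in (0:ℝ)..1, √(1 + P (x, t) ^ 2) ^ 3 := ⟨_, rfl⟩
    have hI0 : 0 ≤ I := by
      rw [hI]; exact intervalIntegral.integral_nonneg zero_le_one fun x _ => by positivity
    rw [← hI]
    have h1 : I ^ 2 ≤ 1 + I ^ 3 := by
      rcases le_total I 1 with h | h
      · have : I ^ 2 ≤ 1 := pow_le_one₀ hI0 h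
        have : 0 ≤ I ^ 3 := by positivity
        linarith
      · have : I ^ 2 ≤ I ^ 3 := pow_le_pow_right₀ h (by norm_num)
        linarith
    have h2 := mul_le_mul_of_nonneg_left h1 (by positivity : 0 ≤ 3 * (M ^ 2 + 1))
    have h3 : 0 ≤ 6 * (M ^ 2 + 1) ^ 2 := by positivity
    linarith
end
end

section
/- Let C > 0, T > 0, and let u : [0,1] × [0,T] → ℝ be a smooth function such that ∫₀^T ∫₀¹ u_t(x,t)² dx dt ≤ C, and for every t ∈ [0,T] both ∫₀¹ u_x(x,t)² dx ≤ C and ∫₀¹ u(x,t)² dx ≤ C. Then there exists C' > 0, depending only on C, such that |u(x,t) − u(y,s)| ≤ C' (|x−y|^{1/2} + |t−s|^{1/4}) for all x, y ∈ [0,1] and t, s ∈ [0,T]. -/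
open Real MeasureTheory

noncomputable section

/-- Cauchy-Schwarz on an interval. -/
theorem cs_aux (f : ℝ → ℝ) (hf : Continuous f) (a b : ℝ) (hab : a ≤ b) :
    (∫ x in a..b, f x) ^ 2 ≤ (b - a) * ∫ x in a..b, (f x) ^ 2 := by
  rcases hab.eq_or_lt with rfl | hlt
  · simp
  have key : ∀ c : ℝ, 0 ≤ (∫ x in a..b, (f x) ^ 2) - 2 * c * (∫ x in a..b, f x)
      + c ^ 2 * (b - a) := by
    intro c
    have h0 : 0 ≤ ∫ x in a..b, (f x - c) ^ 2 :=
      intervalIntegral.integral_nonneg hab (fun x _ => sq_nonneg _)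
    have h1 : (∫ x in a..b, (f x - c) ^ 2) = ∫ x in a..b, (((f x) ^ 2 - 2 * c * f x) + c ^ 2) := by
      congr 1; ext x; ring
    rw [h1, intervalIntegral.integral_add, intervalIntegral.integral_sub,
      intervalIntegral.integral_const_mul, intervalIntegral.integral_const, smul_eq_mul] at h0
    · linarith
    all_goals exact Continuous.intervalIntegrable (by fun_prop) _ _
  have hp : 0 < b - a := by linarith
  have h := key ((∫ x in a..b, f x) / (b - a))
  have h2 : (∫ x in a..b, (f x) ^ 2) - 2 * ((∫ x in a..b, f x) / (b - a)) * (∫ x in a..b, f x)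
      + ((∫ x in a..b, f x) / (b - a)) ^ 2 * (b - a)
      = ((b - a) * (∫ x in a..b, (f x) ^ 2) - (∫ x in a..b, f x) ^ 2) / (b - a) := by
    field_simp; ring
  rw [h2] at h
  have h3 := mul_nonneg h hp.le
  rw [div_mul_cancel₀ _ hp.ne'] at h3
  linarith

theorem hasderiv_t (u : ℝ → ℝ → ℝ) (hu : ContDiff ℝ (⊤ : ℕ∞) (fun p : ℝ × ℝ => u p.1 p.2))
    (x t : ℝ) : HasDerivAt (fun t' => u x t')
      (fderiv ℝ (fun p : ℝ × ℝ => u p.1 p.2) (x, t) (0, 1)) t := by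
  have h1 := (hu.differentiable (by simp) (x, t)).hasFDerivAt
  have h2 : HasDerivAt (fun t' : ℝ => (x, t')) ((0 : ℝ), (1 : ℝ)) t :=
    (hasDerivAt_const t x).prodMk (hasDerivAt_id t)
  exact h1.comp_hasDerivAt t h2

theorem hasderiv_x (u : ℝ → ℝ → ℝ) (hu : ContDiff ℝ (⊤ : ℕ∞) (fun p : ℝ × ℝ => u p.1 p.2))
    (x t : ℝ) : HasDerivAt (fun x' => u x' t)
      (fderiv ℝ (fun p : ℝ × ℝ => u p.1 p.2) (x, t) (1, 0)) x := by
  have h1 := (hu.differentiable (by simp) (x, t)).hasFDerivAt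
  have h2 : HasDerivAt (fun x' : ℝ => (x', t)) ((1 : ℝ), (0 : ℝ)) x :=
    (hasDerivAt_id x).prodMk (hasDerivAt_const x t)
  exact h1.comp_hasDerivAt x h2

theorem cont_pdt (u : ℝ → ℝ → ℝ) (hu : ContDiff ℝ (⊤ : ℕ∞) (fun p : ℝ × ℝ => u p.1 p.2)) :
    Continuous (fun p : ℝ × ℝ => pdt u p.1 p.2) := by
  have : (fun p : ℝ × ℝ => pdt u p.1 p.2)
      = fun p => fderiv ℝ (fun p : ℝ × ℝ => u p.1 p.2) p (0, 1) := by
    ext p; exact (hasderiv_t u hu p.1 p.2).deriv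
  rw [this]
  exact (hu.continuous_fderiv (by simp)).clm_apply continuous_const

theorem cont_pdx (u : ℝ → ℝ → ℝ) (hu : ContDiff ℝ (⊤ : ℕ∞) (fun p : ℝ × ℝ => u p.1 p.2)) :
    Continuous (fun p : ℝ × ℝ => pdx u p.1 p.2) := by
  have : (fun p : ℝ × ℝ => pdx u p.1 p.2)
      = fun p => fderiv ℝ (fun p : ℝ × ℝ => u p.1 p.2) p (1, 0) := by
    ext p; exact (hasderiv_x u hu p.1 p.2).deriv
  rw [this]
  exact (hu.continuous_fderiv (by simp)).clm_apply continuous_const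

/-- If `f` is `C¹`, then the increment is controlled by the `L²` norm of the derivative. -/
theorem incr_aux (f f' : ℝ → ℝ) (hf : ∀ x, HasDerivAt f (f' x) x) (hf' : Continuous f')
    (a b : ℝ) (hab : a ≤ b) :
    (f b - f a) ^ 2 ≤ (b - a) * ∫ x in a..b, (f' x) ^ 2 := by
  rw [← intervalIntegral.integral_eq_sub_of_hasDerivAt (fun x _ => hf x)
    (hf'.intervalIntegrable _ _)]
  exact cs_aux f' hf' a b hab

theorem sub_int (f : ℝ → ℝ) (hf : Continuous f) (h0 : ∀ x, 0 ≤ f x) (a b c d : ℝ)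
    (hca : c ≤ a) (hab : a ≤ b) (hbd : b ≤ d) :
    (∫ x in a..b, f x) ≤ ∫ x in c..d, f x :=
  intervalIntegral.integral_mono_interval hca hab hbd (Filter.Eventually.of_forall h0)
    (hf.intervalIntegrable _ _)

theorem space_aux_s15 (C T : ℝ) (u : ℝ → ℝ → ℝ)
    (hu : ContDiff ℝ (⊤ : ℕ∞) (fun p : ℝ × ℝ => u p.1 p.2)) (t : ℝ)
    (h : (∫ x in (0:ℝ)..1, (pdx u x t) ^ 2) ≤ C) (x : ℝ) (hx : x ∈ Set.Icc (0:ℝ) 1)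
    (y : ℝ) (hy : y ∈ Set.Icc (0:ℝ) 1) : (u x t - u y t) ^ 2 ≤ C * |x - y| := by
  wlog hxy : y ≤ x generalizing x y
  · have := this y hy x hx (by linarith)
    rw [abs_sub_comm]; nlinarith
  have hc : Continuous (fun x => pdx u x t) := (cont_pdx u hu).comp (by fun_prop : Continuous (fun x : ℝ => (x, t)))
  have h1 := incr_aux (fun x => u x t) (fun x => pdx u x t)
    (fun x => (hasderiv_x u hu x t).differentiableAt.hasDerivAt) hc y x hxy
  have h2 := sub_int (fun x => (pdx u x t) ^ 2) (by fun_prop) (fun x => sq_nonneg _) y x 0 1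
    hy.1 hxy hx.2
  rw [abs_of_nonneg (by linarith)]
  calc _ ≤ _ := h1
    _ ≤ (x - y) * C := mul_le_mul_of_nonneg_left (h2.trans h) (by linarith)
    _ = _ := by ring

theorem time_aux_s15 (C T : ℝ) (u : ℝ → ℝ → ℝ)
    (hu : ContDiff ℝ (⊤ : ℕ∞) (fun p : ℝ × ℝ => u p.1 p.2))
    (h : (∫ t in (0:ℝ)..T, ∫ x in (0:ℝ)..1, (pdt u x t) ^ 2) ≤ C)
    (s t : ℝ) (hs : 0 ≤ s) (hst : s ≤ t) (ht : t ≤ T) :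
    (∫ x in (0:ℝ)..1, (u x t - u x s) ^ 2) ≤ C * (t - s) := by
  have hc := cont_pdt u hu
  have hcu : Continuous (fun p : ℝ × ℝ => u p.1 p.2) := hu.continuous
  have hut : ∀ t, Continuous (fun x => u x t) := fun t => hcu.comp (by fun_prop : Continuous (fun x : ℝ => (x, t)))
  have hut1 := hut t
  have hut2 := hut s
  have hc2 : Continuous (Function.uncurry fun x τ => (pdt u x τ) ^ 2) := by
    have : Continuous (fun p : ℝ × ℝ => (pdt u p.1 p.2) ^ 2) := by fun_prop
    exact this
  have hcx : Continuous (fun x => ∫ τ in s..t, (pdt u x τ) ^ 2) :=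
    intervalIntegral.continuous_parametric_intervalIntegral_of_continuous'
      (f := fun x τ => (pdt u x τ) ^ 2) hc2 s t
  have hct : Continuous (fun τ => ∫ x in (0:ℝ)..1, (pdt u x τ) ^ 2) :=
    intervalIntegral.continuous_parametric_intervalIntegral_of_continuous'
      (f := fun τ x => (pdt u x τ) ^ 2) (hc2.comp continuous_swap) 0 1
  calc (∫ x in (0:ℝ)..1, (u x t - u x s) ^ 2)
      ≤ ∫ x in (0:ℝ)..1, (t - s) * ∫ τ in s..t, (pdt u x τ) ^ 2 := by
        apply intervalIntegral.integral_mono_on zero_le_one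
        · exact Continuous.intervalIntegrable (by fun_prop) _ _
        · exact Continuous.intervalIntegrable (by fun_prop) _ _
        · intro x _
          exact incr_aux (fun t => u x t) (fun t => pdt u x t)
            (fun t => (hasderiv_t u hu x t).differentiableAt.hasDerivAt)
            (hc.comp (by fun_prop : Continuous (fun t : ℝ => (x, t)))) s t hst
    _ = (t - s) * ∫ τ in s..t, ∫ x in (0:ℝ)..1, (pdt u x τ) ^ 2 := by
        rw [intervalIntegral.integral_const_mul]
        congr 1
        apply intervalIntegral_intervalIntegral_swap (F := fun x τ => (pdt u x τ) ^ 2)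
        exact (hc2.continuousOn.integrableOn_compact
          (isCompact_uIcc.prod isCompact_uIcc)).mono_set
          (Set.prod_mono Set.uIoc_subset_uIcc Set.uIoc_subset_uIcc)
    _ ≤ (t - s) * C := by
        apply mul_le_mul_of_nonneg_left _ (by linarith)
        exact (sub_int _ hct (fun τ => intervalIntegral.integral_nonneg zero_le_one
          (fun x _ => sq_nonneg _)) s t 0 T hs hst ht).trans h
    _ = _ := by ring

/-- Interpolation between `L²` and `C^{1/2}`. -/
theorem interp_aux (w : ℝ → ℝ) (hw : Continuous w) (K A h : ℝ) (hK : 0 ≤ K)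
    (hh : 0 < h) (hh1 : h ≤ 1)
    (hA : (∫ x in (0:ℝ)..1, (w x) ^ 2) ≤ A)
    (hH : ∀ x ∈ Set.Icc (0:ℝ) 1, ∀ y ∈ Set.Icc (0:ℝ) 1, (w x - w y) ^ 2 ≤ K * |x - y|)
    (x : ℝ) (hx : x ∈ Set.Icc (0:ℝ) 1) : h * (w x) ^ 2 ≤ 2 * A + 2 * K * h ^ 2 := by
  obtain ⟨a, ha0, ha1, hax, hxa⟩ : ∃ a : ℝ, 0 ≤ a ∧ a + h ≤ 1 ∧ a ≤ x ∧ x ≤ a + h := by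
    refine ⟨min x (1 - h), le_min hx.1 (by linarith), ?_, min_le_left _ _, ?_⟩
    · have := min_le_right x (1 - h); linarith
    · rcases min_choice x (1 - h) with e | e <;> rw [e] <;> linarith [hx.2]
  have h1 : (∫ _y in a..(a + h), (w x) ^ 2) ≤ ∫ y in a..(a + h), (2 * (w y) ^ 2 + 2 * K * h) := by
    apply intervalIntegral.integral_mono_on (by linarith)
    · exact Continuous.intervalIntegrable (by fun_prop) _ _
    · exact Continuous.intervalIntegrable (by fun_prop) _ _
    · intro y hy
      have e1 := hH x hx y ⟨by linarith [hy.1], by linarith [hy.2]⟩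
      have e2 : |x - y| ≤ h := by
        rw [abs_le]; constructor <;> linarith [hy.1, hy.2]
      have e3 := mul_le_mul_of_nonneg_left e2 hK
      nlinarith [sq_nonneg (w x - 2 * w y)]
  rw [intervalIntegral.integral_const, intervalIntegral.integral_add,
    intervalIntegral.integral_const_mul, intervalIntegral.integral_const, smul_eq_mul,
    smul_eq_mul] at h1
  · have h2 := sub_int (fun y => (w y) ^ 2) (by fun_prop) (fun x => sq_nonneg _) a (a + h) 0 1
      ha0 (by linarith) ha1
    have h3 : a + h - a = h := by ring
    rw [h3] at h1
    nlinarith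
  all_goals exact Continuous.intervalIntegrable (by fun_prop) _ _

theorem timept_aux (C T : ℝ) (hC : 0 < C) (u : ℝ → ℝ → ℝ)
    (hu : ContDiff ℝ (⊤ : ℕ∞) (fun p : ℝ × ℝ => u p.1 p.2))
    (h : (∫ t in (0:ℝ)..T, ∫ x in (0:ℝ)..1, (pdt u x t) ^ 2) ≤ C)
    (hb : ∀ t ∈ Set.Icc (0:ℝ) T,
        (∫ x in (0:ℝ)..1, (pdx u x t) ^ 2) ≤ C ∧ (∫ x in (0:ℝ)..1, (u x t) ^ 2) ≤ C)
    (x : ℝ) (hx : x ∈ Set.Icc (0:ℝ) 1)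
    (s t : ℝ) (hs : 0 ≤ s) (hst : s ≤ t) (ht : t ≤ T) :
    (u x t - u x s) ^ 2 ≤ 16 * C * √(t - s) := by
  rcases hst.eq_or_lt with rfl | hlt
  · simp
  have hcu : Continuous (fun p : ℝ × ℝ => u p.1 p.2) := hu.continuous
  have hut : ∀ t, Continuous (fun x => u x t) := fun t => hcu.comp (by fun_prop : Continuous (fun x : ℝ => (x, t)))
  have hut1 := hut t
  have hut2 := hut s
  have bt := hb t ⟨by linarith, ht⟩
  have bs := hb s ⟨hs, by linarith⟩
  have hH : ∀ x ∈ Set.Icc (0:ℝ) 1, ∀ y ∈ Set.Icc (0:ℝ) 1,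
      ((u x t - u x s) - (u y t - u y s)) ^ 2 ≤ 4 * C * |x - y| := by
    intro x hx y hy
    have e1 := space_aux_s15 C T u hu t bt.1 x hx y hy
    have e2 := space_aux_s15 C T u hu s bs.1 x hx y hy
    nlinarith [sq_nonneg ((u x t - u y t) + (u x s - u y s))]
  have hd : 0 < t - s := by linarith
  have hq : 0 < √(t - s) := Real.sqrt_pos.2 hd
  have hqq : √(t - s) ^ 2 = t - s := Real.sq_sqrt hd.le
  rcases le_total (√(t - s)) 1 with hle | hle
  · have := interp_aux (fun x => u x t - u x s) (by fun_prop) (4 * C) (C * (t - s)) (√(t - s))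
      (by positivity) hq hle (time_aux_s15 C T u hu h s t hs hst ht) hH x hx
    rw [hqq] at this
    have h5 : √(t - s) * (u x t - u x s) ^ 2 ≤ √(t - s) * (10 * C * √(t - s)) := by
      calc _ ≤ _ := this
        _ = 10 * C * √(t - s) ^ 2 := by rw [hqq]; ring
        _ = _ := by ring
    have h6 := le_of_mul_le_mul_left h5 hq
    nlinarith [mul_pos hC hq]
  · have hA : (∫ x in (0:ℝ)..1, (u x t - u x s) ^ 2) ≤ 4 * C := by
      have : (∫ x in (0:ℝ)..1, (u x t - u x s) ^ 2)
          ≤ ∫ x in (0:ℝ)..1, (2 * (u x t) ^ 2 + 2 * (u x s) ^ 2) := by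
        apply intervalIntegral.integral_mono_on zero_le_one
        · exact Continuous.intervalIntegrable (by fun_prop) _ _
        · exact Continuous.intervalIntegrable (by fun_prop) _ _
        · intro x _
          nlinarith [sq_nonneg (u x t + u x s)]
      rw [intervalIntegral.integral_add, intervalIntegral.integral_const_mul,
        intervalIntegral.integral_const_mul] at this
      · linarith [bt.2, bs.2]
      all_goals exact Continuous.intervalIntegrable (by fun_prop) _ _
    have := interp_aux (fun x => u x t - u x s) (by fun_prop) (4 * C) (4 * C) 1
      (by positivity) one_pos le_rfl hA hH x hx
    nlinarith

theorem statement15 (C : ℝ) (hC : 0 < C) :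
    ∃ C' > (0:ℝ), ∀ T : ℝ, 0 < T → ∀ u : ℝ → ℝ → ℝ,
      ContDiff ℝ (⊤ : ℕ∞) (fun p : ℝ × ℝ => u p.1 p.2) →
      (∫ t in (0:ℝ)..T, ∫ x in (0:ℝ)..1, (pdt u x t) ^ 2) ≤ C →
      (∀ t ∈ Set.Icc (0:ℝ) T,
        (∫ x in (0:ℝ)..1, (pdx u x t) ^ 2) ≤ C ∧ (∫ x in (0:ℝ)..1, (u x t) ^ 2) ≤ C) →
      ∀ x ∈ Set.Icc (0:ℝ) 1, ∀ y ∈ Set.Icc (0:ℝ) 1,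
        ∀ t ∈ Set.Icc (0:ℝ) T, ∀ s ∈ Set.Icc (0:ℝ) T,
          |u x t - u y s| ≤ C' * (|x - y| ^ ((1:ℝ)/2) + |t - s| ^ ((1:ℝ)/4)) := by
  refine ⟨4 * √C, by positivity, ?_⟩
  intro T hT u hu h hb x hx y hy t ht s hs
  have hCs : √C ^ 2 = C := Real.sq_sqrt hC.le
  have e1 : |u x t - u y t| ≤ 4 * √C * |x - y| ^ ((1:ℝ)/2) := by
    apply abs_le_of_sq_le_sq _ (by positivity)
    rw [← Real.sqrt_eq_rpow, mul_pow, mul_pow, hCs, Real.sq_sqrt (abs_nonneg _)]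
    have := space_aux_s15 C T u hu t (hb t ht).1 x hx y hy
    nlinarith [mul_nonneg hC.le (abs_nonneg (x - y))]
  have e2 : |u y t - u y s| ≤ 4 * √C * |t - s| ^ ((1:ℝ)/4) := by
    apply abs_le_of_sq_le_sq _ (by positivity)
    have e3 : (|t - s| ^ ((1:ℝ)/4)) ^ 2 = √|t - s| := by
      rw [Real.sqrt_eq_rpow, ← Real.rpow_natCast, ← Real.rpow_mul (abs_nonneg _)]
      norm_num
    rw [mul_pow, mul_pow, hCs, e3]
    rcases le_total s t with hst | hst
    · have := timept_aux C T hC u hu h hb y hy s t hs.1 hst ht.2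
      rw [abs_of_nonneg (by linarith)]
      linarith
    · have := timept_aux C T hC u hu h hb y hy t s ht.1 hst hs.2
      rw [abs_sub_comm, abs_of_nonneg (by linarith)]
      linarith [sq_nonneg (u y t - u y s), sub_sq_comm (u y t) (u y s)]
  calc |u x t - u y s| ≤ |u x t - u y t| + |u y t - u y s| := abs_sub_le _ _ _
    _ ≤ _ := by rw [mul_add]; exact add_le_add e1 e2
end
end

section
/- Let g : [0,1] → ℝ be measurable and bounded, and let u₀ ∈ W^{2,∞}([0,1]) with u₀(0) = u₀(1) and u₀'(0) = u₀'(1). Then there exist T > 0, depending only on u₀ and ‖g‖_∞, and a function u : [0,1] × [0,T] → ℝ with u(·,0) = u₀ such that: (i) u is Lipschitz continuous in t uniformly in x, and there is a constant M with ‖u(·,t)‖_{W^{2,∞}([0,1])} ≤ M for a.e. t ∈ [0,T]; (ii) u is a weak solution of u_t = u_xx/(1 + u_x²) + g(x) √(1 + u_x²), i.e. ∫₀^T ∫₀¹ ( u_t φ + arctan(u_x) φ_x − g(x) √(1 + u_x²) φ ) dx dt = 0 for every φ ∈ C¹([0,1] × (0,T)) compactly supported in time with φ(0,t) = φ(1,t)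 for all t. -/
open Real MeasureTheory

noncomputable section


/-- Admissible test functions: `C¹` on `[0,1] × (0,T)`, compactly supported in time
inside `(0,T)`, and `x`-periodic. -/
def IsTest (T : ℝ) (φ : ℝ → ℝ → ℝ) : Prop :=
  ContDiff ℝ 1 (fun p : ℝ × ℝ => φ p.1 p.2) ∧
  (∃ a b : ℝ, 0 < a ∧ b < T ∧ ∀ x t, t ∉ Set.Icc a b → φ x t = 0) ∧
  (∀ t, φ 0 t = φ 1 t)

/-- `u` is a weak solution on `[0,1] × [0,T]` of
`u_t = u_xx/(1+u_x²) + h(x)√(1+u_x²)` with periodic boundary conditions, in the class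
`W^{1,∞}([0,T], L^∞([0,1])) ∩ L^∞([0,T], W^{2,∞}([0,1]))`.  Here `ut`, `ux`, `uxx` are
the (a.e.) derivatives of `u`, `L` is the time-Lipschitz constant, and `M` a uniform
bound on the spatial `W^{2,∞}` norms. -/
def IsWeakSol (h : ℝ → ℝ) (T : ℝ) (u ut ux uxx : ℝ → ℝ → ℝ) (L M : ℝ) : Prop :=
  -- `u ∈ W^{1,∞}([0,T], L^∞([0,1]))`: Lipschitz in time, uniformly in space
  (∀ x ∈ Set.Icc (0:ℝ) 1, ∀ t ∈ Set.Icc (0:ℝ) T, ∀ s ∈ Set.Icc (0:ℝ) T,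
      |u x t - u x s| ≤ L * |t - s|) ∧
  -- `ut` is the a.e. time derivative of `u`, bounded by `L`
  (∀ x ∈ Set.Icc (0:ℝ) 1, ∀ᵐ t ∂(volume.restrict (Set.Icc (0:ℝ) T)),
      HasDerivAt (fun t' => u x t') (ut x t) t ∧ |ut x t| ≤ L) ∧
  -- `u ∈ L^∞([0,T], W^{2,∞}([0,1]))`, with boundary conditions
  (∀ᵐ t ∂(volume.restrict (Set.Icc (0:ℝ) T)),
      (∀ x ∈ Set.Icc (0:ℝ) 1,
        HasDerivAt (fun x' => u x' t) (ux x t) x ∧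
        |u x t| ≤ M ∧ |ux x t| ≤ M ∧ |uxx x t| ≤ M) ∧
      (∀ᵐ x ∂(volume.restrict (Set.Icc (0:ℝ) 1)),
        HasDerivAt (fun x' => ux x' t) (uxx x t) x) ∧
      (u 0 t - u 0 0 = u 1 t - u 1 0 ∧ ux 0 t = ux 1 t)) ∧
  -- weak formulation of the equation
  (∀ φ : ℝ → ℝ → ℝ, IsTest T φ →
    (∫ t in (0:ℝ)..T, ∫ x in (0:ℝ)..1,
      (ut x t * φ x t + Real.arctan (ux x t) * deriv (fun x' => φ x' t) x
        - h x * Real.sqrt (1 + (ux x t) ^ 2) * φ x t)) = 0)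


/-- truncation to `[-R, R]` -/
def clp (R p : ℝ) : ℝ := max (-R) (min R p)

/-- truncated arctangent -/
def AA (R p : ℝ) : ℝ := Real.arctan (clp R p) + (1 / (1 + R ^ 2)) * (p - clp R p)

/-- truncated area element -/
def bb (R p : ℝ) : ℝ := Real.sqrt (1 + (clp R p) ^ 2)

lemma clp_mono {R p q : ℝ} (h : p ≤ q) : clp R p ≤ clp R q := by
  unfold clp; gcongr

lemma clp_diff {R p q : ℝ} (h : p ≤ q) : clp R q - clp R p ≤ q - p := by
  unfold clp
  rcases max_cases (-R) (min R p) with h1 | h1 <;> rcases max_cases (-R) (min R q) with h2 | h2 <;>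
  rcases min_cases R p with h3 | h3 <;> rcases min_cases R q with h4 | h4 <;> linarith

lemma clp_abs {R : ℝ} (hR : 0 < R) (p : ℝ) : |clp R p| ≤ R := by
  unfold clp
  rw [abs_le]
  exact ⟨le_max_left _ _, max_le (by linarith) (min_le_left _ _)⟩

lemma clp_eq {R p : ℝ} (h : |p| ≤ R) : clp R p = p := by
  unfold clp
  rw [abs_le] at h
  rw [min_eq_right h.2, max_eq_right h.1]

lemma arctan_lower {R p q : ℝ} (hp : |p| ≤ R) (hq : |q| ≤ R) (h : p ≤ q) :
    (1 / (1 + R ^ 2)) * (q - p) ≤ Real.arctan q - Real.arctan p := by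
  have hR : 0 ≤ R := (abs_nonneg p).trans hp
  rw [abs_le] at hp hq
  refine Convex.mul_sub_le_image_sub_of_le_deriv (convex_Icc (-R) R)
    Real.continuous_arctan.continuousOn Real.differentiable_arctan.differentiableOn
    (fun x hx => ?_) p hp q hq h
  rw [interior_Icc] at hx
  rw [Real.deriv_arctan]
  have : x ^ 2 ≤ R ^ 2 := sq_le_sq' hx.1.le hx.2.le
  exact one_div_le_one_div_of_le (by positivity) (by linarith)

lemma arctan_upper {p q : ℝ} (h : p ≤ q) : Real.arctan q - Real.arctan p ≤ q - p := by
  have := image_sub_le_mul_sub_of_deriv_le (f := Real.arctan) (C := 1)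
    Real.differentiable_arctan (fun x => ?_) h
  · simpa using this
  · rw [Real.deriv_arctan, div_le_one (by positivity)]
    nlinarith [sq_nonneg x]

lemma c_pos (R : ℝ) : 0 < 1 / (1 + R ^ 2) := by positivity

lemma c_le_one (R : ℝ) : 1 / (1 + R ^ 2) ≤ 1 := by
  rw [div_le_one (by positivity)]; nlinarith [sq_nonneg R]

lemma AA_lower {R p q : ℝ} (hR : 0 < R) (h : p ≤ q) :
    (1 / (1 + R ^ 2)) * (q - p) ≤ AA R q - AA R p := by
  have := arctan_lower (clp_abs hR p) (clp_abs hR q) (clp_mono h)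
  unfold AA
  linarith

lemma AA_upper {R p q : ℝ} (h : p ≤ q) : AA R q - AA R p ≤ q - p := by
  have h1 := arctan_upper (clp_mono (R := R) h)
  have h2 := clp_diff (R := R) h
  have := mul_le_mul_of_nonneg_right (c_le_one R) (sub_nonneg.2 h2)
  unfold AA
  linarith

lemma AA_slope {R : ℝ} (hR : 0 < R) (p q : ℝ) :
    ∃ α, 1 / (1 + R ^ 2) ≤ α ∧ α ≤ 1 ∧ AA R q - AA R p = α * (q - p) := by
  rcases lt_trichotomy p q with h | h | h
  · refine ⟨(AA R q - AA R p) / (q - p), ?_, ?_, ?_⟩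
    · rw [le_div_iff₀ (by linarith)]; exact AA_lower hR h.le
    · rw [div_le_one (by linarith)]; exact AA_upper h.le
    · field_simp [sub_ne_zero.2 h.ne']
  · exact ⟨1, c_le_one R, le_rfl, by simp [h]⟩
  · refine ⟨(AA R p - AA R q) / (p - q), ?_, ?_, ?_⟩
    · rw [le_div_iff₀ (by linarith)]; exact AA_lower hR h.le
    · rw [div_le_one (by linarith)]; exact AA_upper h.le
    · have : p - q ≠ 0 := sub_ne_zero.2 h.ne'
      field_simp
      ring

lemma AA_lip {R : ℝ} (hR : 0 < R) (p q : ℝ) : |AA R q - AA R p| ≤ |q - p| := by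
  obtain ⟨α, h1, h2, h3⟩ := AA_slope hR p q
  have := c_pos R
  rw [h3, abs_mul, abs_of_nonneg (by linarith : 0 ≤ α)]
  nlinarith [abs_nonneg (q - p)]

lemma AA_lower_abs {R : ℝ} (hR : 0 < R) (p q : ℝ) :
    |q - p| ≤ (1 + R ^ 2) * |AA R q - AA R p| := by
  obtain ⟨α, h1, h2, h3⟩ := AA_slope hR p q
  have h0 := c_pos R
  rw [h3, abs_mul, abs_of_nonneg (by linarith : 0 ≤ α)]
  have : 1 ≤ (1 + R ^ 2) * α := by
    rw [div_le_iff₀ (by positivity)] at h1; linarith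
  nlinarith [abs_nonneg (q - p)]

lemma sqrt_lip (p q : ℝ) : |Real.sqrt (1 + q ^ 2) - Real.sqrt (1 + p ^ 2)| ≤ |q - p| := by
  have h1 := Real.sq_sqrt (show 0 ≤ 1 + q ^ 2 by positivity)
  have h2 := Real.sq_sqrt (show 0 ≤ 1 + p ^ 2 by positivity)
  have h3 := Real.sqrt_nonneg (1 + q ^ 2)
  have h4 := Real.sqrt_nonneg (1 + p ^ 2)
  rw [← sq_le_sq]
  have h5 : 1 + p * q ≤ Real.sqrt (1 + q ^ 2) * Real.sqrt (1 + p ^ 2) := by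
    rw [← Real.sqrt_mul (by positivity)]
    apply Real.le_sqrt_of_sq_le
    nlinarith [sq_nonneg (p - q)]
  nlinarith

lemma clp_lip {R : ℝ} (p q : ℝ) : |clp R q - clp R p| ≤ |q - p| := by
  rcases le_total p q with h | h
  · rw [abs_of_nonneg (sub_nonneg.2 (clp_mono h)), abs_of_nonneg (sub_nonneg.2 h)]
    exact clp_diff h
  · rw [abs_sub_comm, abs_sub_comm q, abs_of_nonneg (sub_nonneg.2 (clp_mono h)),
      abs_of_nonneg (sub_nonneg.2 h)]
    exact clp_diff h

lemma bb_lip {R : ℝ} (p q : ℝ) : |bb R q - bb R p| ≤ |q - p| :=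
  (sqrt_lip _ _).trans (clp_lip p q)

lemma bb_slope {R : ℝ} (p q : ℝ) : ∃ β, |β| ≤ 1 ∧ bb R q - bb R p = β * (q - p) := by
  by_cases h : p = q
  · exact ⟨0, by simp, by simp [h]⟩
  · have h0 : q - p ≠ 0 := sub_ne_zero.2 (Ne.symm h)
    refine ⟨(bb R q - bb R p) / (q - p), ?_, by field_simp⟩
    rw [abs_div, div_le_one (abs_pos.2 h0)]
    exact bb_lip p q

lemma bb_abs {R : ℝ} (hR : 0 < R) (p : ℝ) : |bb R p| ≤ 1 + R := by
  unfold bb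
  rw [abs_of_nonneg (Real.sqrt_nonneg _)]
  apply Real.sqrt_le_iff.2 ⟨by linarith, ?_⟩
  have := clp_abs hR p
  have := sq_le_sq' (abs_le.1 this).1 (abs_le.1 this).2
  nlinarith

lemma clp_cont (R : ℝ) : Continuous (clp R) := by unfold clp; fun_prop
lemma AA_cont (R : ℝ) : Continuous (AA R) := by
  have := clp_cont R
  unfold AA; exact (Real.continuous_arctan.comp this).add (by fun_prop)
lemma bb_cont (R : ℝ) : Continuous (bb R) := by
  have := clp_cont R
  unfold bb; fun_prop

lemma AA_zero {R : ℝ} (hR : 0 < R) : AA R 0 = 0 := by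
  unfold AA; rw [clp_eq (by simpa using hR.le)]; simp

lemma AA_abs {R : ℝ} (hR : 0 < R) (p : ℝ) : |AA R p| ≤ |p| := by
  simpa [AA_zero hR] using AA_lip hR 0 p

lemma AA_eq {R p : ℝ} (h : |p| ≤ R) : AA R p = Real.arctan p := by
  unfold AA; rw [clp_eq h]; simp

lemma bb_eq {R p : ℝ} (h : |p| ≤ R) : bb R p = Real.sqrt (1 + p ^ 2) := by
  unfold bb; rw [clp_eq h]

/-! ### The explicit scheme -/

/-- one explicit Euler step of the finite difference scheme -/
def stp (R : ℝ) (n : ℕ) (G U : ℤ → ℝ) (i : ℤ) : ℝ :=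
  U i + 1 / (4 * (n:ℝ) ^ 2) * (n * (AA R (n * (U (i + 1) - U i)) - AA R (n * (U i - U (i - 1))))
    + G i * bb R (n * (U (i + 1) - U i)))

/-- the scheme -/
def sch (R : ℝ) (n : ℕ) (G U0 : ℤ → ℝ) : ℕ → ℤ → ℝ
  | 0 => U0
  | k + 1 => stp R n G (sch R n G U0 k)

lemma stp_mono {R M : ℝ} {n : ℕ} {G U W : ℤ → ℝ} (hR : 0 < R) (hn : 0 < n)
    (hnM : M ≤ n * (1 / (1 + R ^ 2))) (hG : ∀ i, |G i| ≤ M) (h : ∀ i, U i ≤ W i) (i : ℤ) :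
    stp R n G U i ≤ stp R n G W i := by
  have hn' : (0:ℝ) < n := by exact_mod_cast hn
  obtain ⟨α, a1, a2, a3⟩ := AA_slope hR (n * (U (i + 1) - U i)) (n * (W (i + 1) - W i))
  obtain ⟨α', b1, b2, b3⟩ := AA_slope hR (n * (U i - U (i - 1))) (n * (W i - W (i - 1)))
  obtain ⟨β, c1, c2⟩ := bb_slope (R := R) (n * (U (i + 1) - U i)) (n * (W (i + 1) - W i))
  have hc := c_pos R
  have hGβ : |G i * β| ≤ M := by
    rw [abs_mul]
    have := hG i
    nlinarith [abs_nonneg (G i), abs_nonneg β]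
  have hGβ' := abs_le.1 hGβ
  have key : stp R n G W i - stp R n G U i =
      (W i - U i) * (1 - 1 / (4 * (n:ℝ) ^ 2) * (n ^ 2 * α + n ^ 2 * α' + G i * β * n))
      + (W (i + 1) - U (i + 1)) * (1 / (4 * (n:ℝ) ^ 2) * (n * (n * α + G i * β)))
      + (W (i - 1) - U (i - 1)) * (1 / (4 * (n:ℝ) ^ 2) * (n ^ 2 * α')) := by
    have : stp R n G W i - stp R n G U i = (W i - U i) + 1 / (4 * (n:ℝ) ^ 2) *
       (n * ((AA R (n * (W (i + 1) - W i)) - AA R (n * (U (i + 1) - U i)))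
        - (AA R (n * (W i - W (i - 1))) - AA R (n * (U i - U (i - 1)))))
       + G i * (bb R (n * (W (i + 1) - W i)) - bb R (n * (U (i + 1) - U i)))) := by
      unfold stp; ring
    rw [this, a3, b3, c2]; ring
  have hMn : M ≤ n := hnM.trans (by nlinarith [c_le_one R])
  have e1 : 0 ≤ 1 - 1 / (4 * (n:ℝ) ^ 2) * (n ^ 2 * α + n ^ 2 * α' + G i * β * n) := by
    rw [sub_nonneg, one_div, inv_mul_le_iff₀ (by positivity)]
    nlinarith [sq_nonneg (n:ℝ)]
  have e2 : 0 ≤ n * α + G i * β := by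
    have : (n:ℝ) * (1 / (1 + R ^ 2)) ≤ n * α := by gcongr
    linarith
  have e3 : 0 ≤ α' := by linarith
  have := h i
  have := h (i + 1)
  have := h (i - 1)
  have t1 : 0 ≤ (W i - U i) * (1 - 1 / (4 * (n:ℝ) ^ 2) * (n ^ 2 * α + n ^ 2 * α' + G i * β * n)) :=
    mul_nonneg (by linarith) e1
  have t2 : 0 ≤ (W (i + 1) - U (i + 1)) * (1 / (4 * (n:ℝ) ^ 2) * (n * (n * α + G i * β))) :=
    mul_nonneg (by linarith) (by positivity)
  have t3 : 0 ≤ (W (i - 1) - U (i - 1)) * (1 / (4 * (n:ℝ) ^ 2) * (n ^ 2 * α')) :=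
    mul_nonneg (by linarith) (by positivity)
  linarith

lemma stp_add (R : ℝ) (n : ℕ) (G U : ℤ → ℝ) (C : ℝ) (i : ℤ) :
    stp R n G (fun j => U j + C) i = stp R n G U i + C := by
  unfold stp
  simp only [add_sub_add_right_eq_sub]
  ring

lemma stp_contr {R M : ℝ} {n : ℕ} {G U W : ℤ → ℝ} (hR : 0 < R) (hn : 0 < n)
    (hnM : M ≤ n * (1 / (1 + R ^ 2))) (hG : ∀ i, |G i| ≤ M) {C : ℝ}
    (h : ∀ i, |U i - W i| ≤ C) (i : ℤ) :
    |stp R n G U i - stp R n G W i| ≤ C := by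
  have h1 := stp_mono (U := U) (W := fun j => W j + C) hR hn hnM hG
    (fun j => by linarith [(abs_le.1 (h j)).2]) i
  have h2 := stp_mono (U := W) (W := fun j => U j + C) hR hn hnM hG
    (fun j => by linarith [(abs_le.1 (h j)).1]) i
  rw [stp_add] at h1 h2
  rw [abs_le]; constructor <;> linarith

lemma sch_step {R M K : ℝ} {n : ℕ} {G U : ℤ → ℝ} (hR : 0 < R) (hn : 0 < n)
    (hnM : M ≤ n * (1 / (1 + R ^ 2))) (hG : ∀ i, |G i| ≤ M)
    (hU : ∀ i, |n * (U (i + 1) - U i) - n * (U i - U (i - 1))| ≤ K / n) (k : ℕ) (i : ℤ) :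
    |sch R n G U (k + 1) i - sch R n G U k i| ≤ (K + M * (1 + R)) * (1 / (4 * (n:ℝ) ^ 2)) := by
  have hn' : (0:ℝ) < n := by exact_mod_cast hn
  induction k generalizing i with
  | zero =>
    have e : sch R n G U (0 + 1) i - sch R n G U 0 i = 1 / (4 * (n:ℝ) ^ 2) *
      (n * (AA R (n * (U (i + 1) - U i)) - AA R (n * (U i - U (i - 1))))
      + G i * bb R (n * (U (i + 1) - U i))) := by
      simp only [sch, stp]; ring
    rw [e, abs_mul, abs_of_pos (by positivity), mul_comm]
    gcongr
    refine (abs_add_le _ _).trans ?_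
    rw [abs_mul, abs_mul, abs_of_pos hn']
    have h1 := (AA_lip hR (n * (U i - U (i - 1))) (n * (U (i + 1) - U i))).trans (hU i)
    have h2 := mul_le_mul (hG i) (bb_abs hR (n * (U (i + 1) - U i))) (abs_nonneg _)
      ((abs_nonneg _).trans (hG i))
    rw [le_div_iff₀ hn'] at h1
    linarith
  | succ k ih => exact stp_contr hR hn hnM hG ih i

lemma sch_second {R M K : ℝ} {n : ℕ} {G U : ℤ → ℝ} (hR : 0 < R) (hn : 0 < n)
    (hnM : M ≤ n * (1 / (1 + R ^ 2))) (hG : ∀ i, |G i| ≤ M)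
    (hU : ∀ i, |n * (U (i + 1) - U i) - n * (U i - U (i - 1))| ≤ K / n) (k : ℕ) (i : ℤ) :
    |n * (sch R n G U k (i + 1) - sch R n G U k i) - n * (sch R n G U k i - sch R n G U k (i - 1))|
      ≤ (1 + R ^ 2) * ((K + M * (1 + R)) + M * (1 + R)) / n := by
  have hn' : (0:ℝ) < n := by exact_mod_cast hn
  have h := sch_step hR hn hnM hG hU k i
  set V := sch R n G U k with hV
  have e : sch R n G U (k + 1) i - V i = 1 / (4 * (n:ℝ) ^ 2) *
      (n * (AA R (n * (V (i + 1) - V i)) - AA R (n * (V i - V (i - 1))))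
      + G i * bb R (n * (V (i + 1) - V i))) := by
    simp only [sch, stp, ← hV]; ring
  rw [e, abs_mul, abs_of_pos (by positivity), mul_comm] at h
  have h' := le_of_mul_le_mul_right h (by positivity)
  have h2 := mul_le_mul (hG i) (bb_abs hR (n * (V (i + 1) - V i))) (abs_nonneg _)
      ((abs_nonneg _).trans (hG i))
  rw [← abs_mul] at h2
  have h3 : |n * (AA R (n * (V (i + 1) - V i)) - AA R (n * (V i - V (i - 1))))|
      ≤ (K + M * (1 + R)) + M * (1 + R) := by
    rw [abs_le] at *
    constructor <;> linarith
  rw [abs_mul, abs_of_pos hn'] at h3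
  have h4 := AA_lower_abs hR (n * (V i - V (i - 1))) (n * (V (i + 1) - V i))
  rw [le_div_iff₀ hn']
  calc _ ≤ (1 + R ^ 2) * |AA R (n * (V (i + 1) - V i)) - AA R (n * (V i - V (i - 1)))| * n := by
        gcongr
    _ = (1 + R ^ 2) * (n * |AA R (n * (V (i + 1) - V i)) - AA R (n * (V i - V (i - 1)))|) := by ring
    _ ≤ _ := by gcongr

lemma sch_per {R : ℝ} {n : ℕ} {G U : ℤ → ℝ} (hG : ∀ i, G (i + n) = G i)
    (hU : ∀ i, U (i + n) = U i) (k : ℕ) (i : ℤ) :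
    sch R n G U k (i + n) = sch R n G U k i := by
  induction k generalizing i with
  | zero => exact hU i
  | succ k ih =>
    have h1 : i + n + 1 = (i + 1) + n := by ring
    have h2 : i + n - 1 = (i - 1) + n := by ring
    simp only [sch, stp]
    rw [h1, h2, ih, ih, ih, hG]

lemma disc_p {V : ℤ → ℝ} {n : ℕ} {C : ℝ}
    (hV : ∀ i, |n * (V (i + 1) - V i) - n * (V i - V (i - 1))| ≤ C / n) (i : ℤ) (m : ℕ) :
    |n * (V (i + m + 1) - V (i + m)) - n * (V (i + 1) - V i)| ≤ C * (m / n) := by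
  induction m with
  | zero => simp
  | succ m ih =>
    have h := hV (i + (m + 1))
    have e1 : i + ((m:ℤ) + 1) - 1 = i + m := by ring
    have e2 : i + (m:ℤ) + 1 = i + (m + 1) := by ring
    rw [e1] at h
    rw [e2] at ih
    push_cast
    have : C * (((m:ℝ) + 1) / n) = C * (m / n) + C / n := by ring
    rw [this]
    rw [abs_le] at *
    constructor <;> linarith

lemma disc_V {V : ℤ → ℝ} {n : ℕ} {C : ℝ} (hn : 0 < n) (hC : 0 ≤ C)
    (hV : ∀ i, |n * (V (i + 1) - V i) - n * (V i - V (i - 1))| ≤ C / n) (i : ℤ) (m : ℕ) :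
    |V (i + m) - V i - (m / n) * (n * (V (i + 1) - V i))| ≤ C * (m / n) ^ 2 := by
  have hn' : (0:ℝ) < n := by exact_mod_cast hn
  induction m with
  | zero => simp
  | succ m ih =>
    have h := disc_p hV i m
    have e : V (i + (m + 1 : ℕ)) - V i - ((m + 1 : ℕ) / n) * (n * (V (i + 1) - V i)) =
      (V (i + m) - V i - (m / n) * (n * (V (i + 1) - V i))) +
      (1 / n) * (n * (V (i + m + 1) - V (i + m)) - n * (V (i + 1) - V i)) := by
      push_cast
      rw [← add_assoc]
      field_simp
      ring
    rw [e]
    refine (abs_add_le _ _).trans ?_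
    rw [abs_mul, abs_of_pos (show (0:ℝ) < 1 / n by positivity)]
    have h2 : 1 / (n:ℝ) * |n * (V (i + m + 1) - V (i + m)) - n * (V (i + 1) - V i)| ≤
      1 / n * (C * (m / n)) := by gcongr
    have h3 : C * ((((m + 1 : ℕ) : ℝ)) / n) ^ 2 =
      C * (m / n) ^ 2 + 1 / n * (C * (m / n)) + (C * (1 / n) * (m / n) + C * (1 / n) ^ 2) := by
      push_cast; ring
    have h4 : 0 ≤ C * (1 / n) * ((m:ℝ) / n) + C * (1 / n) ^ 2 := by positivity
    linarith

lemma disc_bd {V : ℤ → ℝ} {n : ℕ} {C : ℝ} (hn : 0 < n) (hC : 0 ≤ C)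
    (hV : ∀ i, |n * (V (i + 1) - V i) - n * (V i - V (i - 1))| ≤ C / n)
    (hper : ∀ i, V (i + n) = V i) (i : ℤ) :
    |n * (V (i + 1) - V i)| ≤ C := by
  have hn' : (0:ℝ) < n := by exact_mod_cast hn
  have h := disc_V hn hC hV i n
  rw [hper, div_self hn'.ne'] at h
  rw [← abs_neg]
  simpa using h

lemma disc_lip {V : ℤ → ℝ} {n : ℕ} {C : ℝ} (hn : 0 < n)
    (hb : ∀ i, |n * (V (i + 1) - V i)| ≤ C) (i : ℤ) (m : ℕ) :
    |V (i + m) - V i| ≤ C * (m / n) := by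
  have hn' : (0:ℝ) < n := by exact_mod_cast hn
  induction m with
  | zero => simp
  | succ m ih =>
    have h := hb (i + m)
    rw [abs_mul, abs_of_pos hn'] at h
    have h' : |V (i + m + 1) - V (i + m)| ≤ C / n := by
      rw [le_div_iff₀ hn']; linarith
    push_cast
    rw [← add_assoc]
    have e : C * (((m:ℝ) + 1) / n) = C * (m / n) + C / n := by ring
    rw [e]
    rw [abs_le] at *
    constructor <;> linarith

lemma floor_split {n : ℕ} (hn : 0 < n) {x y : ℝ} (h : x ≤ y) :
    ∃ m : ℕ, ⌊(n:ℝ) * y⌋ = ⌊(n:ℝ) * x⌋ + m ∧ (m:ℝ) / n ≤ (y - x) + 1 / n ∧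
      |(m:ℝ) / n - (y - x)| ≤ 1 / n := by
  have hn' : (0:ℝ) < n := by exact_mod_cast hn
  have h1 : ⌊(n:ℝ) * x⌋ ≤ ⌊(n:ℝ) * y⌋ := Int.floor_mono (by gcongr)
  obtain ⟨m, hm⟩ := Int.eq_ofNat_of_zero_le (sub_nonneg.2 h1)
  have hm' : ((⌊(n:ℝ) * y⌋ : ℤ) : ℝ) - (⌊(n:ℝ) * x⌋ : ℤ) = m := by exact_mod_cast hm
  have a1 := Int.floor_le ((n:ℝ) * x)
  have a2 := Int.lt_floor_add_one ((n:ℝ) * x)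
  have a3 := Int.floor_le ((n:ℝ) * y)
  have a4 := Int.lt_floor_add_one ((n:ℝ) * y)
  have key : |(m:ℝ) / n - (y - x)| ≤ 1 / n := by
    have : (m:ℝ) / n - (y - x) = (m - n * (y - x)) / n := by field_simp
    rw [this, abs_div, abs_of_pos hn']
    gcongr
    rw [abs_le]; constructor <;> linarith
  exact ⟨m, by linarith, by linarith [(abs_le.1 key).2], key⟩

lemma nfloor_diff {a b : ℝ} (h : a ≤ b) : (⌊b⌋₊ : ℝ) - ⌊a⌋₊ ≤ (b - a) + 1 := by
  rcases le_total 0 a with ha | ha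
  · have := Nat.floor_le (ha.trans h)
    have := Nat.lt_floor_add_one a
    linarith
  · rw [Nat.floor_of_nonpos ha]
    rcases le_total 0 b with hb | hb
    · have := Nat.floor_le hb
      push_cast; linarith
    · rw [Nat.floor_of_nonpos hb]; push_cast; linarith

/-- piecewise constant interpolation of the scheme -/
def uap (n : ℕ) (U : ℕ → ℤ → ℝ) (x t : ℝ) : ℝ := U ⌊4 * (n:ℝ) ^ 2 * t⌋₊ ⌊(n:ℝ) * x⌋

/-- piecewise constant interpolation of the discrete slopes -/
def pap (n : ℕ) (U : ℕ → ℤ → ℝ) (x t : ℝ) : ℝ :=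
  n * (U ⌊4 * (n:ℝ) ^ 2 * t⌋₊ (⌊(n:ℝ) * x⌋ + 1) - U ⌊4 * (n:ℝ) ^ 2 * t⌋₊ ⌊(n:ℝ) * x⌋)

section ap
variable {n : ℕ} {U : ℕ → ℤ → ℝ} {C L : ℝ}

lemma uap_t (hn : 0 < n) (hL : 0 ≤ L)
    (hU : ∀ k i, |U (k + 1) i - U k i| ≤ L * (1 / (4 * (n:ℝ) ^ 2))) (x t s : ℝ) :
    |uap n U x t - uap n U x s| ≤ L * (|t - s| + 1 / n) := by
  wlog h : s ≤ t generalizing t s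
  · rw [abs_sub_comm, abs_sub_comm t]; exact this s t (le_of_not_ge h)
  have hn' : (0:ℝ) < n := by exact_mod_cast hn
  have hn1 : (1:ℝ) ≤ n := by exact_mod_cast hn
  have h1 : 4 * (n:ℝ) ^ 2 * s ≤ 4 * (n:ℝ) ^ 2 * t := by gcongr
  have hm := Nat.floor_mono h1
  obtain ⟨m, hm⟩ := Nat.exists_eq_add_of_le hm
  have hd := nfloor_diff h1
  rw [hm] at hd
  push_cast at hd
  have gen : ∀ k m i, |U (k + m) i - U k i| ≤ L * (1 / (4 * (n:ℝ) ^ 2)) * m := by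
    intro k m i
    induction m with
    | zero => simp
    | succ m ih =>
      have := hU (k + m) i
      rw [← add_assoc]
      push_cast
      rw [abs_le] at *
      constructor <;> linarith
  unfold uap
  rw [hm]
  refine (gen _ m _).trans ?_
  rw [mul_assoc]
  gcongr
  rw [abs_of_nonneg (by linarith)]
  rw [one_div, inv_mul_le_iff₀ (by positivity)]
  have : 4 * (n:ℝ) ^ 2 * (t - s + 1 / n) = 4 * (n:ℝ) ^ 2 * (t - s) + 4 * n := by
    field_simp
  rw [this]; linarith

lemma uap_x (hn : 0 < n) (hC : 0 ≤ C) (hb : ∀ k i, |n * (U k (i + 1) - U k i)| ≤ C) (t x y : ℝ) :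
    |uap n U x t - uap n U y t| ≤ C * (|x - y| + 1 / n) := by
  wlog h : y ≤ x generalizing x y
  · rw [abs_sub_comm, abs_sub_comm x]; exact this y x (le_of_not_ge h)
  obtain ⟨m, h1, h2, h3⟩ := floor_split hn h
  unfold uap
  rw [h1]
  refine (disc_lip hn (hb _) _ m).trans ?_
  rw [abs_of_nonneg (sub_nonneg.2 h)]
  gcongr

lemma pap_x (hn : 0 < n) (hC : 0 ≤ C)
    (hV : ∀ k i, |n * (U k (i + 1) - U k i) - n * (U k i - U k (i - 1))| ≤ C / n) (t x y : ℝ) :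
    |pap n U x t - pap n U y t| ≤ C * (|x - y| + 1 / n) := by
  wlog h : y ≤ x generalizing x y
  · rw [abs_sub_comm, abs_sub_comm x]; exact this y x (le_of_not_ge h)
  obtain ⟨m, h1, h2, h3⟩ := floor_split hn h
  unfold pap
  rw [h1]
  refine (disc_p (hV _) _ m).trans ?_
  rw [abs_of_nonneg (sub_nonneg.2 h)]
  gcongr

lemma uap_taylor (hn : 0 < n) (hC : 0 ≤ C) (hb : ∀ k i, |n * (U k (i + 1) - U k i)| ≤ C)
    (hV : ∀ k i, |n * (U k (i + 1) - U k i) - n * (U k i - U k (i - 1))| ≤ C / n) (t : ℝ)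
    {x y : ℝ} (h : x ≤ y) :
    |uap n U y t - uap n U x t - (y - x) * pap n U x t| ≤ C * ((y - x) + 1 / n) ^ 2 + C * (1 / n) := by
  obtain ⟨m, h1, h2, h3⟩ := floor_split hn h
  have h4 := disc_V hn hC (hV ⌊4 * (n:ℝ) ^ 2 * t⌋₊) ⌊(n:ℝ) * x⌋ m
  have h5 := hb ⌊4 * (n:ℝ) ^ 2 * t⌋₊ ⌊(n:ℝ) * x⌋
  unfold uap pap
  rw [h1]
  set k := ⌊4 * (n:ℝ) ^ 2 * t⌋₊
  set i := ⌊(n:ℝ) * x⌋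
  have e : U k (i + m) - U k i - (y - x) * (n * (U k (i + 1) - U k i)) =
    (U k (i + m) - U k i - (m / n) * (n * (U k (i + 1) - U k i))) +
    ((m:ℝ) / n - (y - x)) * (n * (U k (i + 1) - U k i)) := by ring
  rw [e]
  refine (abs_add_le _ _).trans (add_le_add ?_ ?_)
  · refine h4.trans ?_
    gcongr
  · rw [abs_mul, mul_comm C]
    gcongr

lemma uap_meas : Measurable (fun z : ℝ × ℝ => uap n U z.1 z.2) := by
  have h1 : Measurable (fun z : ℝ × ℝ => (⌊4 * (n:ℝ) ^ 2 * z.2⌋₊, ⌊(n:ℝ) * z.1⌋)) :=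
    (Nat.measurable_floor.comp (by fun_prop)).prodMk (Int.measurable_floor.comp (by fun_prop))
  exact (measurable_of_countable (fun q : ℕ × ℤ => U q.1 q.2)).comp h1

lemma pap_meas : Measurable (fun z : ℝ × ℝ => pap n U z.1 z.2) := by
  have h1 : Measurable (fun z : ℝ × ℝ => (⌊4 * (n:ℝ) ^ 2 * z.2⌋₊, ⌊(n:ℝ) * z.1⌋)) :=
    (Nat.measurable_floor.comp (by fun_prop)).prodMk (Int.measurable_floor.comp (by fun_prop))
  exact (measurable_of_countable (fun q : ℕ × ℤ => n * (U q.1 (q.2 + 1) - U q.1 q.2))).comp h1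

lemma uap_per (hU : ∀ k i, U k (i + n) = U k i) (x t : ℝ) : uap n U (x + 1) t = uap n U x t := by
  unfold uap
  have : (n:ℝ) * (x + 1) = n * x + (n:ℕ) := by ring
  rw [this, Int.floor_add_natCast, hU]

lemma pap_per (hU : ∀ k i, U k (i + n) = U k i) (x t : ℝ) : pap n U (x + 1) t = pap n U x t := by
  unfold pap
  have : (n:ℝ) * (x + 1) = n * x + (n:ℕ) := by ring
  rw [this, Int.floor_add_natCast, hU]
  have : ⌊(n:ℝ) * x⌋ + (n:ℤ) + 1 = ⌊(n:ℝ) * x⌋ + 1 + n := by ring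
  rw [this, hU]

/-- the scheme as a functional equation for the interpolations -/
lemma uap_scheme {R : ℝ} {G U0 : ℤ → ℝ} (hn : 0 < n) (x t : ℝ) (ht : 0 ≤ t) :
    uap n (sch R n G U0) x (t + 1 / (4 * (n:ℝ) ^ 2)) - uap n (sch R n G U0) x t =
    1 / (4 * (n:ℝ) ^ 2) * (n * (AA R (pap n (sch R n G U0) x t)
      - AA R (pap n (sch R n G U0) (x - 1 / n) t))
      + G ⌊(n:ℝ) * x⌋ * bb R (pap n (sch R n G U0) x t)) := by
  have hn' : (0:ℝ) < n := by exact_mod_cast hn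
  have e1 : 4 * (n:ℝ) ^ 2 * (t + 1 / (4 * (n:ℝ) ^ 2)) = 4 * (n:ℝ) ^ 2 * t + 1 := by field_simp
  have e2 : (n:ℝ) * (x - 1 / n) = n * x - 1 := by field_simp
  unfold uap pap
  rw [e1, e2, Nat.floor_add_one (by positivity), Int.floor_sub_one, sub_add_cancel]
  simp only [sch, stp]
  ring

end ap

/-! ### Periodic extension -/

lemma per_lip {f : ℝ → ℝ} {K : ℝ} (hK : 0 ≤ K)
    (hf : ∀ x ∈ Set.Icc (0:ℝ) 1, ∀ y ∈ Set.Icc (0:ℝ) 1, |f x - f y| ≤ K * |x - y|)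
    (h01 : f 0 = f 1) (x : ℝ) {h : ℝ} (h0 : 0 ≤ h) (h1 : h ≤ 1) :
    |f (Int.fract (x + h)) - f (Int.fract x)| ≤ K * h := by
  have hx0 := Int.fract_nonneg x
  have hx1 := Int.fract_lt_one x
  have hxe := Int.self_sub_floor x
  by_cases hc : Int.fract x + h < 1
  · have : Int.fract (x + h) = Int.fract x + h := by
      rw [Int.fract_eq_iff]
      exact ⟨by linarith, hc, ⌊x⌋, by linarith⟩
    rw [this]
    refine (hf _ ⟨by linarith, by linarith⟩ _ ⟨hx0, hx1.le⟩).trans ?_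
    rw [add_sub_cancel_left, abs_of_nonneg h0]
  · push Not at hc
    have : Int.fract (x + h) = Int.fract x + h - 1 := by
      rw [Int.fract_eq_iff]
      exact ⟨by linarith, by linarith, ⌊x⌋ + 1, by push_cast; linarith⟩
    rw [this]
    have a := hf (Int.fract x + h - 1) ⟨by linarith, by linarith⟩ 0 ⟨le_rfl, by norm_num⟩
    have b := hf 1 ⟨by norm_num, le_rfl⟩ (Int.fract x) ⟨hx0, hx1.le⟩
    rw [abs_of_nonneg (a := Int.fract x + h - 1 - 0) (by linarith)] at a
    rw [abs_of_nonneg (a := 1 - Int.fract x) (by linarith)] at b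
    have : f (Int.fract x + h - 1) - f (Int.fract x) =
      (f (Int.fract x + h - 1) - f 0) + (f 1 - f (Int.fract x)) := by rw [h01]; ring
    rw [this]
    refine (abs_add_le _ _).trans ?_
    linarith

lemma fract_eventually (x : ℝ) : ∀ᶠ y : ℝ in nhdsWithin x (Set.Ici x), Int.fract y = y - ⌊x⌋ := by
  have : Set.Iio ((⌊x⌋:ℝ) + 1) ∈ nhds x := Iio_mem_nhds (Int.lt_floor_add_one x)
  filter_upwards [mem_nhdsWithin_of_mem_nhds this, self_mem_nhdsWithin] with y hy hy'
  rw [Int.fract_eq_iff]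
  have := Int.floor_le x
  simp only [Set.mem_Iio, Set.mem_Ici] at hy hy'
  exact ⟨by linarith, by linarith, ⌊x⌋, by ring⟩

lemma per_deriv {f f' : ℝ → ℝ} (hf : ∀ x ∈ Set.Icc (0:ℝ) 1, HasDerivAt f (f' x) x) (x : ℝ) :
    HasDerivWithinAt (fun y => f (Int.fract y)) (f' (Int.fract x)) (Set.Ici x) x := by
  have h := hf (Int.fract x) ⟨Int.fract_nonneg x, (Int.fract_lt_one x).le⟩
  rw [← Int.self_sub_floor] at h
  have h2 : HasDerivAt (fun y => f (y - ⌊x⌋)) (f' (x - ⌊x⌋)) x := by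
    simpa using h.comp_sub_const x (⌊x⌋:ℝ)
  have h3 := h2.hasDerivWithinAt (s := Set.Ici x)
  rw [Int.self_sub_floor] at h3
  refine h3.congr_of_eventuallyEq ?_ ?_
  · filter_upwards [fract_eventually x] with y hy
    simp [hy]
  · simp [Int.self_sub_floor]

lemma per_cont {f : ℝ → ℝ} (hf : ContinuousOn f (Set.Icc 0 1)) (h01 : f 0 = f 1) :
    Continuous (fun y => f (Int.fract y)) :=
  ContinuousOn.comp_fract'' hf h01

lemma start_slope {f f' : ℝ → ℝ} {R0 : ℝ} (hf : ∀ x ∈ Set.Icc (0:ℝ) 1, HasDerivAt f (f' x) x)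
    (h01 : f 0 = f 1) (hb : ∀ x ∈ Set.Icc (0:ℝ) 1, |f' x| ≤ R0) {n : ℕ} (hn : 0 < n) (i : ℤ) :
    |n * (f (Int.fract (((i + 1 : ℤ):ℝ) / n)) - f (Int.fract ((i:ℝ) / n)))| ≤ R0 := by
  have hn' : (0:ℝ) < n := by exact_mod_cast hn
  have hc := per_cont (fun x hx => (hf x hx).continuousAt.continuousWithinAt) h01
  have hle : (i:ℝ) / n ≤ ((i + 1 : ℤ):ℝ) / n := by gcongr; push_cast; linarith
  have := norm_image_sub_le_of_norm_deriv_right_le_segment (a := (i:ℝ) / n)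
    (b := ((i + 1 : ℤ):ℝ) / n) (C := R0) hc.continuousOn (fun x _ => per_deriv hf x)
    (fun x _ => hb _ ⟨Int.fract_nonneg x, (Int.fract_lt_one x).le⟩) _ ⟨hle, le_rfl⟩
  rw [Real.norm_eq_abs] at this
  rw [abs_mul, abs_of_pos hn']
  calc _ ≤ n * (R0 * (((i + 1 : ℤ):ℝ) / n - (i:ℝ) / n)) := by gcongr
    _ = R0 := by push_cast; field_simp; ring

lemma start_second {f f' : ℝ → ℝ} {K : ℝ} (hK : 0 ≤ K)
    (hf : ∀ x ∈ Set.Icc (0:ℝ) 1, HasDerivAt f (f' x) x)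
    (h01 : f 0 = f 1) (h01' : f' 0 = f' 1)
    (hl : ∀ x ∈ Set.Icc (0:ℝ) 1, ∀ y ∈ Set.Icc (0:ℝ) 1, |f' x - f' y| ≤ K * |x - y|)
    {n : ℕ} (hn : 0 < n) (i : ℤ) :
    |n * (f (Int.fract (((i + 1 : ℤ):ℝ) / n)) - f (Int.fract ((i:ℝ) / n)))
     - n * (f (Int.fract ((i:ℝ) / n)) - f (Int.fract (((i - 1 : ℤ):ℝ) / n)))| ≤ K / n := by
  have hn' : (0:ℝ) < n := by exact_mod_cast hn
  have hn1 : (1:ℝ) / n ≤ 1 := by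
    rw [div_le_one hn']; exact_mod_cast hn
  have hc := per_cont (fun x hx => (hf x hx).continuousAt.continuousWithinAt) h01
  have hle : ((i - 1 : ℤ):ℝ) / n ≤ (i:ℝ) / n := by gcongr; linarith
  have hd : ∀ x, HasDerivWithinAt
      (fun y => f (Int.fract (y + 1 / n)) - f (Int.fract y))
      (f' (Int.fract (x + 1 / n)) - f' (Int.fract x)) (Set.Ici x) x := by
    intro x
    refine HasDerivWithinAt.sub ?_ (per_deriv hf x)
    have h1 := per_deriv hf (x + 1 / n)
    have h2 : HasDerivWithinAt (fun y : ℝ => y + 1 / (n:ℝ)) 1 (Set.Ici x) x :=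
      ((hasDerivAt_id x).add_const _).hasDerivWithinAt
    have h3 := HasDerivWithinAt.comp x h1 h2 (fun y hy => by
      simp only [Set.mem_Ici] at *; linarith)
    simpa [Function.comp_def] using h3
  have := norm_image_sub_le_of_norm_deriv_right_le_segment (a := ((i - 1 : ℤ):ℝ) / n)
    (b := (i:ℝ) / n) (C := K * (1 / n))
    (f := fun y => f (Int.fract (y + 1 / n)) - f (Int.fract y))
    ((hc.comp (continuous_id.add continuous_const)).sub hc).continuousOn
    (fun x _ => hd x)
    (fun x _ => per_lip hK hl h01' x (by positivity) hn1) _ ⟨hle, le_rfl⟩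
  rw [Real.norm_eq_abs] at this
  have e1 : (i:ℝ) / n + 1 / n = ((i + 1 : ℤ):ℝ) / n := by push_cast; ring
  have e2 : ((i - 1 : ℤ):ℝ) / n + 1 / n = (i:ℝ) / n := by push_cast; ring
  have e3 : (i:ℝ) / n - ((i - 1 : ℤ):ℝ) / n = 1 / n := by push_cast; ring
  rw [e1, e2, e3] at this
  rw [← mul_sub, abs_mul, abs_of_pos hn']
  calc _ ≤ n * (K * (1 / n) * (1 / n)) := by gcongr
    _ = K / n := by field_simp

open Filter Topology in
lemma tendsto_of_approx {a : ℕ → ℝ}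
    (h : ∀ e > 0, ∃ b : ℕ → ℝ, (∃ l, Tendsto b atTop (𝓝 l)) ∧ ∀ᶠ j in atTop, |a j - b j| ≤ e) :
    ∃ l, Tendsto a atTop (𝓝 l) := by
  apply cauchySeq_tendsto_of_complete
  rw [Metric.cauchySeq_iff']
  intro e he
  obtain ⟨b, ⟨l, hl⟩, hb⟩ := h (e / 8) (by positivity)
  have hl' : ∀ᶠ j in atTop, |b j - l| < e / 8 := by
    have := Metric.tendsto_nhds.1 hl (e / 8) (by positivity)
    simpa [Real.dist_eq] using this
  obtain ⟨N, hN⟩ := eventually_atTop.1 (hb.and hl')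
  refine ⟨N, fun j hj => ?_⟩
  have h1 := hN j hj
  have h2 := hN N le_rfl
  rw [Real.dist_eq, abs_lt]
  simp only [abs_le, abs_lt] at h1 h2
  constructor <;> linarith [h1.1.1, h1.1.2, h1.2.1, h1.2.2, h2.1.1, h2.1.2, h2.2.1, h2.2.2]

open Filter Topology in
lemma compact_limit {u p : ℕ → ℝ → ℝ → ℝ} {ε : ℕ → ℝ} {L C C0 : ℝ} (hL : 0 ≤ L) (hC : 0 ≤ C)
    (hε : Tendsto ε atTop (𝓝 0)) (hε0 : ∀ j, 0 ≤ ε j) (hε1 : ∀ j, ε j ≤ 1)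
    (h0 : ∀ j, |u j 0 0| ≤ C0)
    (hut : ∀ j x t s, |u j x t - u j x s| ≤ L * (|t - s| + ε j))
    (hux : ∀ j t x y, |u j x t - u j y t| ≤ C * (|x - y| + ε j))
    (htay : ∀ j t x y, x ≤ y →
      |u j y t - u j x t - (y - x) * p j x t| ≤ C * ((y - x) + ε j) ^ 2 + C * ε j) :
    ∃ ψ : ℕ → ℕ, StrictMono ψ ∧ ∃ v q : ℝ → ℝ → ℝ,
      (∀ x t, Tendsto (fun j => u (ψ j) x t) atTop (𝓝 (v x t))) ∧
      (∀ x t, Tendsto (fun j => p (ψ j) x t) atTop (𝓝 (q x t))) := by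
  let B : ℚ × ℚ → ℝ := fun z => C0 + L * (|(z.2:ℝ)| + 1) + C * (|(z.1:ℝ)| + 1)
  have hK : IsCompact (Set.pi Set.univ (fun z : ℚ × ℚ => Set.Icc (-B z) (B z))) :=
    isCompact_univ_pi (fun z => isCompact_Icc)
  obtain ⟨a, -, ψ, hψ, ha⟩ := hK.tendsto_subseq
    (x := fun j (z : ℚ × ℚ) => u j (z.1:ℝ) (z.2:ℝ)) (by
      intro j z _
      have h1 := hut j z.1 z.2 0
      have h2 := hux j 0 z.1 0
      have h3 := h0 j
      have h4 := hε1 j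
      have h5 := mul_le_mul_of_nonneg_left h4 hL
      have h6 := mul_le_mul_of_nonneg_left h4 hC
      simp only [sub_zero] at h1 h2
      rw [abs_le] at h1 h2 h3
      simp only [Set.mem_Icc, B]
      constructor <;> linarith [h1.1, h1.2, h2.1, h2.2, h3.1, h3.2])
  have hεψ : Tendsto (fun j => ε (ψ j)) atTop (𝓝 0) := hε.comp hψ.tendsto_atTop
  have hu : ∀ x t, ∃ l, Tendsto (fun j => u (ψ j) x t) atTop (𝓝 l) := by
    intro x t
    apply tendsto_of_approx
    intro e he
    have hS : 0 < L + C + 1 := by linarith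
    set δ := e / (2 * (L + C + 1)) with hδ
    have hδ0 : 0 < δ := by positivity
    have hδe : (L + C + 1) * (2 * δ) = e := by rw [hδ]; field_simp
    obtain ⟨x', hx1, hx2⟩ := exists_rat_btwn (show x < x + δ by linarith)
    obtain ⟨t', ht1, ht2⟩ := exists_rat_btwn (show t < t + δ by linarith)
    refine ⟨fun j => u (ψ j) x' t', ⟨_, (tendsto_pi_nhds.1 ha) (x', t')⟩, ?_⟩
    filter_upwards [hεψ.eventually (gt_mem_nhds hδ0)] with j hj
    have h1 := hut (ψ j) x t t'
    have h2 := hux (ψ j) t' x x'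
    have h3 : |t - t'| ≤ δ := by rw [abs_le]; constructor <;> linarith
    have h4 : |x - x'| ≤ δ := by rw [abs_le]; constructor <;> linarith
    have h5 : L * (|t - t'| + ε (ψ j)) ≤ L * (2 * δ) := by gcongr; linarith
    have h6 : C * (|x - x'| + ε (ψ j)) ≤ C * (2 * δ) := by gcongr; linarith
    rw [abs_le] at h1 h2 ⊢
    constructor <;> linarith [h1.1, h1.2, h2.1, h2.2]
  have hp : ∀ x t, ∃ l, Tendsto (fun j => p (ψ j) x t) atTop (𝓝 l) := by
    intro x t
    apply tendsto_of_approx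
    intro e he
    set δ := e / (5 * (C + 1)) with hδ
    have hδ0 : 0 < δ := by positivity
    have hδe : (C + 1) * (5 * δ) = e := by rw [hδ]; field_simp
    obtain ⟨l1, hl1⟩ := hu (x + δ) t
    obtain ⟨l2, hl2⟩ := hu x t
    refine ⟨fun j => (u (ψ j) (x + δ) t - u (ψ j) x t) / δ, ⟨_, (hl1.sub hl2).div_const δ⟩, ?_⟩
    filter_upwards [hεψ.eventually (gt_mem_nhds hδ0),
      hεψ.eventually (gt_mem_nhds (show 0 < δ ^ 2 by positivity))] with j hj1 hj2
    have h1 := htay (ψ j) t x (x + δ) (by linarith)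
    rw [add_sub_cancel_left] at h1
    have h0 := hε0 (ψ j)
    have h2 : C * (δ + ε (ψ j)) ^ 2 + C * ε (ψ j) ≤ C * (2 * δ) ^ 2 + C * δ ^ 2 := by
      gcongr; linarith
    have e1 : p (ψ j) x t - (u (ψ j) (x + δ) t - u (ψ j) x t) / δ =
      -((u (ψ j) (x + δ) t - u (ψ j) x t - δ * p (ψ j) x t) / δ) := by field_simp; ring
    rw [e1, abs_neg, abs_div, abs_of_pos hδ0, div_le_iff₀ hδ0]
    nlinarith
  choose v hv using hu
  choose q hq using hp
  exact ⟨ψ, hψ, v, q, hv, hq⟩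

open Filter Topology in
lemma limit_props {u p : ℕ → ℝ → ℝ → ℝ} {ε : ℕ → ℝ} {L C : ℝ} {v q : ℝ → ℝ → ℝ} (hC : 0 ≤ C)
    (hε : Tendsto ε atTop (𝓝 0))
    (hut : ∀ j x t s, |u j x t - u j x s| ≤ L * (|t - s| + ε j))
    (hux : ∀ j t x y, |u j x t - u j y t| ≤ C * (|x - y| + ε j))
    (hpx : ∀ j t x y, |p j x t - p j y t| ≤ C * (|x - y| + ε j))
    (htay : ∀ j t x y, x ≤ y →
      |u j y t - u j x t - (y - x) * p j x t| ≤ C * ((y - x) + ε j) ^ 2 + C * ε j)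
    (hv : ∀ x t, Tendsto (fun j => u j x t) atTop (𝓝 (v x t)))
    (hq : ∀ x t, Tendsto (fun j => p j x t) atTop (𝓝 (q x t))) :
    (∀ x t s, |v x t - v x s| ≤ L * |t - s|) ∧
    (∀ t x y, |v x t - v y t| ≤ C * |x - y|) ∧
    (∀ t x y, |q x t - q y t| ≤ C * |x - y|) ∧
    (∀ t x y, x ≤ y → |v y t - v x t - (y - x) * q x t| ≤ C * (y - x) ^ 2) ∧
    (∀ t x, HasDerivAt (fun y => v y t) (q x t) x) := by
  have A1 : ∀ x t s, |v x t - v x s| ≤ L * |t - s| := by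
    intro x t s
    have h1 := ((hv x t).sub (hv x s)).abs
    have h2 : Tendsto (fun j => L * (|t - s| + ε j)) atTop (𝓝 (L * (|t - s| + 0))) :=
      (tendsto_const_nhds.add hε).const_mul L
    simpa using le_of_tendsto_of_tendsto' h1 h2 (fun j => hut j x t s)
  have A2 : ∀ t x y, |v x t - v y t| ≤ C * |x - y| := by
    intro t x y
    have h1 := ((hv x t).sub (hv y t)).abs
    have h2 : Tendsto (fun j => C * (|x - y| + ε j)) atTop (𝓝 (C * (|x - y| + 0))) :=
      (tendsto_const_nhds.add hε).const_mul C
    simpa using le_of_tendsto_of_tendsto' h1 h2 (fun j => hux j t x y)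
  have A3 : ∀ t x y, |q x t - q y t| ≤ C * |x - y| := by
    intro t x y
    have h1 := ((hq x t).sub (hq y t)).abs
    have h2 : Tendsto (fun j => C * (|x - y| + ε j)) atTop (𝓝 (C * (|x - y| + 0))) :=
      (tendsto_const_nhds.add hε).const_mul C
    simpa using le_of_tendsto_of_tendsto' h1 h2 (fun j => hpx j t x y)
  have A4 : ∀ t x y, x ≤ y → |v y t - v x t - (y - x) * q x t| ≤ C * (y - x) ^ 2 := by
    intro t x y hxy
    have h1 := (((hv y t).sub (hv x t)).sub ((hq x t).const_mul (y - x))).abs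
    have h2 : Tendsto (fun j => C * ((y - x) + ε j) ^ 2 + C * ε j) atTop
        (𝓝 (C * ((y - x) + 0) ^ 2 + C * 0)) :=
      (((tendsto_const_nhds.add hε).pow 2).const_mul C).add (hε.const_mul C)
    simpa using le_of_tendsto_of_tendsto' h1 h2 (fun j => htay j t x y hxy)
  refine ⟨A1, A2, A3, A4, fun t x => ?_⟩
  have A5 : ∀ y, |v y t - v x t - (y - x) * q x t| ≤ 2 * C * (y - x) ^ 2 := by
    intro y
    rcases le_total x y with h | h
    · refine (A4 t x y h).trans ?_
      nlinarith [mul_nonneg hC (sq_nonneg (y - x))]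
    · have h1 := A4 t y x h
      have h2 := A3 t y x
      have e : v y t - v x t - (y - x) * q x t =
        -(v x t - v y t - (x - y) * q y t) + (y - x) * (q y t - q x t) := by ring
      rw [e]
      refine (abs_add_le _ _).trans ?_
      rw [abs_neg, abs_mul]
      have h3 : |y - x| * |q y t - q x t| ≤ |y - x| * (C * |y - x|) := by gcongr
      have h4 : |y - x| * (C * |y - x|) = C * (y - x) ^ 2 := by
        rw [← sq_abs (y - x)]; ring
      nlinarith
  rw [hasDerivAt_iff_isLittleO]
  have : (fun y => v y t - v x t - (y - x) • q x t) =O[𝓝 x] fun y => (y - x) ^ 2 := by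
    refine Asymptotics.IsBigO.of_bound (2 * C) (Eventually.of_forall fun y => ?_)
    simpa using A5 y
  refine this.trans_isLittleO ?_
  have h := Asymptotics.isLittleO_pow_sub_sub (x₀ := x) (m := 2) (by norm_num)
  simpa only [Real.norm_eq_abs, sq_abs] using h

lemma test_facts {T : ℝ} {φ : ℝ → ℝ → ℝ} (h : IsTest T φ) :
    ∃ a b D : ℝ, 0 < a ∧ b < T ∧ 0 ≤ D ∧ (∀ x t, t ∉ Set.Icc a b → φ x t = 0) ∧
    (∀ x ∈ Set.Icc (0:ℝ) 1, ∀ t, |φ x t| ≤ D) ∧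
    (∀ t, ∀ x ∈ Set.Icc (0:ℝ) 1, ∀ y ∈ Set.Icc (0:ℝ) 1, |φ x t - φ y t| ≤ D * |x - y|) ∧
    (∀ x ∈ Set.Icc (0:ℝ) 1, ∀ t s, |φ x t - φ x s| ≤ D * |t - s|) ∧
    (∀ x t, HasDerivAt (fun x' => φ x' t) (deriv (fun x' => φ x' t) x) x) ∧
    (∀ x t, HasDerivAt (fun t' => φ x t') (deriv (fun t' => φ x t') t) t) ∧
    (∀ x ∈ Set.Icc (0:ℝ) 1, ∀ t, |deriv (fun x' => φ x' t) x| ≤ D) ∧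
    (∀ x ∈ Set.Icc (0:ℝ) 1, ∀ t, |deriv (fun t' => φ x t') t| ≤ D) ∧
    Measurable (fun z : ℝ × ℝ => deriv (fun x' => φ x' z.2) z.1) ∧
    Measurable (fun z : ℝ × ℝ => deriv (fun t' => φ z.1 t') z.2) := by
  obtain ⟨hφ, ⟨a, b, ha, hb, hs⟩, hper⟩ := h
  set f : ℝ × ℝ → ℝ := fun p => φ p.1 p.2 with hf
  have hd : Differentiable ℝ f := hφ.differentiable (by norm_num)
  have hfc : Continuous (fderiv ℝ f) := hφ.continuous_fderiv (by norm_num)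
  obtain ⟨D, hD⟩ := (isCompact_Icc.prod isCompact_Icc : IsCompact
    (Set.Icc (0:ℝ) 1 ×ˢ Set.Icc a b)).exists_bound_of_continuousOn hfc.continuousOn
  obtain ⟨D', hD'⟩ := (isCompact_Icc.prod isCompact_Icc : IsCompact
    (Set.Icc (0:ℝ) 1 ×ˢ Set.Icc a b)).exists_bound_of_continuousOn hφ.continuous.continuousOn
  have hD2 : ∀ z ∈ Set.Icc (0:ℝ) 1 ×ˢ (Set.univ : Set ℝ), ‖fderiv ℝ f z‖ ≤ max D (max D' 0) := by
    rintro ⟨x, t⟩ ⟨hx, -⟩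
    by_cases ht : t ∈ Set.Icc a b
    · exact (hD _ ⟨hx, ht⟩).trans (le_max_left _ _)
    · have ho : IsOpen {z : ℝ × ℝ | z.2 ∉ Set.Icc a b} :=
        (isClosed_Icc.preimage continuous_snd).isOpen_compl
      have : f =ᶠ[nhds (x, t)] fun _ => 0 := by
        filter_upwards [ho.mem_nhds (show (x, t) ∈ {z : ℝ × ℝ | z.2 ∉ Set.Icc a b} from ht)] with z hz
        exact hs _ _ hz
      rw [this.fderiv_eq]
      simp
  have hlip : ∀ z ∈ Set.Icc (0:ℝ) 1 ×ˢ (Set.univ : Set ℝ), ∀ w ∈ Set.Icc (0:ℝ) 1 ×ˢ (Set.univ : Set ℝ),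
      ‖f z - f w‖ ≤ max D (max D' 0) * ‖z - w‖ := by
    intro z hz w hw
    exact Convex.norm_image_sub_le_of_norm_fderiv_le (fun y _ => hd y) hD2
      ((convex_Icc 0 1).prod convex_univ) hw hz
  have hdx : ∀ x t, HasDerivAt (fun x' => φ x' t) (fderiv ℝ f (x, t) (1, 0)) x := by
    intro x t
    have h1 : HasDerivAt (fun x' : ℝ => (x', t)) ((1:ℝ), (0:ℝ)) x :=
      (hasDerivAt_id x).prodMk (hasDerivAt_const x t)
    exact (hd (x, t)).hasFDerivAt.comp_hasDerivAt x h1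
  have hdt : ∀ x t, HasDerivAt (fun t' => φ x t') (fderiv ℝ f (x, t) (0, 1)) t := by
    intro x t
    have h1 : HasDerivAt (fun t' : ℝ => (x, t')) ((0:ℝ), (1:ℝ)) t :=
      (hasDerivAt_const t x).prodMk (hasDerivAt_id t)
    exact (hd (x, t)).hasFDerivAt.comp_hasDerivAt t h1
  refine ⟨a, b, max D (max D' 0), ha, hb, le_max_of_le_right (le_max_right _ _), hs,
    ?_, ?_, ?_, ?_, ?_, ?_, ?_, ?_, ?_⟩
  · intro x hx t
    by_cases ht : t ∈ Set.Icc a b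
    · exact (hD' (x, t) ⟨hx, ht⟩).trans (le_max_of_le_right (le_max_left _ _))
    · rw [hs x t ht, abs_zero]; exact le_max_of_le_right (le_max_right _ _)
  · intro t x hx y hy
    simpa [Prod.norm_def, hf] using hlip (x, t) ⟨hx, trivial⟩ (y, t) ⟨hy, trivial⟩
  · intro x hx t s
    simpa [Prod.norm_def, hf] using hlip (x, t) ⟨hx, trivial⟩ (x, s) ⟨hx, trivial⟩
  · intro x t; exact (hdx x t).differentiableAt.hasDerivAt
  · intro x t; exact (hdt x t).differentiableAt.hasDerivAt
  · intro x hx t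
    rw [(hdx x t).deriv]
    refine ((fderiv ℝ f (x, t)).le_opNorm _).trans ?_
    simpa [Prod.norm_def] using hD2 (x, t) ⟨hx, trivial⟩
  · intro x hx t
    rw [(hdt x t).deriv]
    refine ((fderiv ℝ f (x, t)).le_opNorm _).trans ?_
    simpa [Prod.norm_def] using hD2 (x, t) ⟨hx, trivial⟩
  · have : (fun z : ℝ × ℝ => deriv (fun x' => φ x' z.2) z.1) = fun z => fderiv ℝ f z (1, 0) := by
      ext z; exact (hdx z.1 z.2).deriv
    rw [this]; exact (hfc.clm_apply continuous_const).measurable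
  · have : (fun z : ℝ × ℝ => deriv (fun t' => φ z.1 t') z.2) = fun z => fderiv ℝ f z (0, 1) := by
      ext z; exact (hdt z.1 z.2).deriv
    rw [this]; exact (hfc.clm_apply continuous_const).measurable

/-- The reference measure on `(0,1] × ℝ`. -/
def mu : Measure (ℝ × ℝ) := (volume.restrict (Set.Ioc (0:ℝ) 1)).prod volume

lemma ae_mu_mem : ∀ᵐ z ∂mu, z.1 ∈ Set.Ioo (0:ℝ) 1 := by
  have h : ∀ᵐ x ∂(volume.restrict (Set.Ioc (0:ℝ) 1)), x ∈ Set.Ioo (0:ℝ) 1 := by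
    have h1 : ∀ᵐ x ∂(volume.restrict (Set.Ioc (0:ℝ) 1)), x ∈ Set.Ioc (0:ℝ) 1 :=
      ae_restrict_mem measurableSet_Ioc
    have h2 : ∀ᵐ x ∂(volume.restrict (Set.Ioc (0:ℝ) 1)), x ≠ 1 :=
      ae_restrict_of_ae (Measure.ae_ne volume 1)
    filter_upwards [h1, h2] with x hx hx'
    exact ⟨hx.1, lt_of_le_of_ne hx.2 hx'⟩
  exact Measure.quasiMeasurePreserving_fst.ae h

lemma mu_dom (α β D : ℝ) :
    Integrable ((Set.univ ×ˢ Set.Icc α β : Set (ℝ × ℝ)).indicator (fun _ => D)) mu := by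
  rw [integrable_indicator_iff (MeasurableSet.univ.prod measurableSet_Icc)]
  refine integrableOn_const ?_ (by simp)
  unfold mu
  rw [Measure.prod_prod]
  simp

lemma mu_bound {α β D : ℝ} {F : ℝ × ℝ → ℝ}
    (hb : ∀ x ∈ Set.Icc (0:ℝ) 1, ∀ t ∈ Set.Icc α β, |F (x, t)| ≤ D)
    (h0 : ∀ x t, t ∉ Set.Icc α β → F (x, t) = 0) :
    ∀ᵐ z ∂mu, ‖F z‖ ≤ (Set.univ ×ˢ Set.Icc α β : Set (ℝ × ℝ)).indicator (fun _ => D) z := by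
  filter_upwards [ae_mu_mem] with z hz
  by_cases ht : z.2 ∈ Set.Icc α β
  · rw [Set.indicator_of_mem (show z ∈ Set.univ ×ˢ Set.Icc α β from ⟨trivial, ht⟩)]
    exact hb z.1 ⟨hz.1.le, hz.2.le⟩ z.2 ht
  · rw [Set.indicator_of_notMem (fun h => ht h.2), h0 z.1 z.2 ht, norm_zero]

lemma mu_intg {α β D : ℝ} {F : ℝ × ℝ → ℝ} (hF : Measurable F)
    (hb : ∀ x ∈ Set.Icc (0:ℝ) 1, ∀ t ∈ Set.Icc α β, |F (x, t)| ≤ D)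
    (h0 : ∀ x t, t ∉ Set.Icc α β → F (x, t) = 0) : Integrable F mu :=
  (mu_dom α β D).mono' hF.aestronglyMeasurable (mu_bound hb h0)

lemma mu_shift_t (s : ℝ) : MeasurePreserving (fun z : ℝ × ℝ => (z.1, z.2 + s)) mu mu :=
  (MeasurePreserving.id _).prod (measurePreserving_add_right volume s)

lemma mu_shift_emb (s : ℝ) : MeasurableEmbedding (fun z : ℝ × ℝ => (z.1, z.2 + s)) :=
  ((Homeomorph.refl ℝ).prodCongr (Homeomorph.addRight s)).measurableEmbedding

lemma mu_int_t (F : ℝ × ℝ → ℝ) (s : ℝ) : ∫ z, F (z.1, z.2 + s) ∂mu = ∫ z, F z ∂mu :=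
  (mu_shift_t s).integral_comp (mu_shift_emb s) F

lemma mu_intg_t {F : ℝ × ℝ → ℝ} (hF : Integrable F mu) (s : ℝ) :
    Integrable (fun z : ℝ × ℝ => F (z.1, z.2 + s)) mu :=
  (mu_shift_t s).integrable_comp_of_integrable hF

lemma mu_int_x {F : ℝ × ℝ → ℝ} {h : ℝ} (hF : Integrable F mu)
    (hF' : Integrable (fun z : ℝ × ℝ => F (z.1 - h, z.2)) mu)
    (hper : ∀ x t, F (x + 1, t) = F (x, t)) :
    ∫ z, F (z.1 - h, z.2) ∂mu = ∫ z, F z ∂mu := by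
  unfold mu at *
  rw [integral_prod_symm _ hF, integral_prod_symm _ hF']
  congr 1
  ext t
  rw [← intervalIntegral.integral_of_le zero_le_one, ← intervalIntegral.integral_of_le zero_le_one]
  simp only
  rw [intervalIntegral.integral_comp_sub_right (fun x => F (x, t)) h]
  have hp : Function.Periodic (fun x => F (x, t)) 1 := fun x => hper x t
  have := hp.intervalIntegral_add_eq (0 - h) 0
  rw [zero_add] at this
  rw [← this]
  congr 1
  ring

open Filter Topology in
lemma slope_seq {f : ℝ → ℝ} {f' x : ℝ} (hf : HasDerivAt f f' x) {s : ℕ → ℝ}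
    (hs : Tendsto s atTop (𝓝 0)) (hs0 : ∀ j, s j ≠ 0) :
    Tendsto (fun j => (f (x + s j) - f x) / s j) atTop (𝓝 f') := by
  have h1 : Tendsto s atTop (𝓝[≠] 0) :=
    tendsto_nhdsWithin_iff.2 ⟨hs, Eventually.of_forall hs0⟩
  have := hf.tendsto_slope_zero.comp h1
  refine this.congr fun j => ?_
  simp [div_eq_inv_mul]

open Filter Topology in
/-- backward difference quotients in time of the test function -/
lemma back_seq {f : ℝ → ℝ} {f' x : ℝ} (hf : HasDerivAt f f' x) {s : ℕ → ℝ}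
    (hs : Tendsto s atTop (𝓝 0)) (hs0 : ∀ j, s j ≠ 0) :
    Tendsto (fun j => (f (x - s j) - f x) / s j) atTop (𝓝 (-f')) := by
  have h := (slope_seq hf (s := fun j => - s j) (by simpa using hs.neg) (fun j => by simpa using hs0 j)).neg
  refine h.congr fun j => ?_
  rw [← sub_eq_add_neg, div_neg, neg_neg]

open Filter Topology in
/-- Integration by parts in time for Lipschitz functions. -/
lemma ibp_t {T L : ℝ} {φ v : ℝ → ℝ → ℝ} (hφ : IsTest T φ)
    (hvt : ∀ x t s, |v x t - v x s| ≤ L * |t - s|)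
    (hvc : Continuous (fun z : ℝ × ℝ => v z.1 z.2)) :
    ∫ z, (v z.1 z.2 * (-deriv (fun t' => φ z.1 t') z.2) - deriv (fun t' => v z.1 t') z.2 * φ z.1 z.2) ∂mu
      = 0 := by
  have hφc := hφ.1.continuous
  obtain ⟨a, b, D, ha, hb, hD, hs, hφb, hφx, hφt, hdx, hdt, hdxb, hdtb, hdxm, hdtm⟩ := test_facts hφ
  have hL : 0 ≤ L := by
    have := (abs_nonneg _).trans (hvt 0 1 0)
    simpa using this
  obtain ⟨B, hB⟩ := (isCompact_Icc.prod isCompact_Icc : IsCompact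
    (Set.Icc (0:ℝ) 1 ×ˢ Set.Icc a (b + 1))).exists_bound_of_continuousOn hvc.continuousOn
  have hB0 : ∀ x ∈ Set.Icc (0:ℝ) 1, ∀ t ∈ Set.Icc a (b + 1), |v x t| ≤ max B 0 :=
    fun x hx t ht => (hB (x, t) ⟨hx, ht⟩).trans (le_max_left _ _)
  let s : ℕ → ℝ := fun j => 1 / ((j:ℝ) + 1)
  have hs1 : Tendsto s atTop (𝓝 0) := tendsto_one_div_add_atTop_nhds_zero_nat
  have hspos : ∀ j, 0 < s j := fun j => by positivity
  have hsle : ∀ j, s j ≤ 1 := fun j => by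
    rw [div_le_one (by positivity)]
    have : (0:ℝ) ≤ j := by positivity
    linarith
  let F : ℕ → ℝ × ℝ → ℝ := fun j z =>
    v z.1 z.2 * ((φ z.1 (z.2 - s j) - φ z.1 z.2) / s j)
      - (v z.1 (z.2 + s j) - v z.1 z.2) / s j * φ z.1 z.2
  have hFm : ∀ j, Measurable (F j) := by
    intro j
    have c1 : Continuous (fun z : ℝ × ℝ => φ z.1 (z.2 - s j)) :=
      hφc.comp (continuous_fst.prodMk (continuous_snd.sub continuous_const))
    have c2 : Continuous (fun z : ℝ × ℝ => v z.1 (z.2 + s j)) :=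
      hvc.comp (continuous_fst.prodMk (continuous_snd.add continuous_const))
    exact ((hvc.mul ((c1.sub hφc).div_const _)).sub (((c2.sub hvc).div_const _).mul hφc)).measurable
  have hs0 : ∀ j x t, t ∉ Set.Icc a (b + 1) → F j (x, t) = 0 := by
    intro j x t ht
    have h1 : φ x t = 0 := hs x t (fun h => ht ⟨h.1, by linarith [h.2]⟩)
    have h2 : φ x (t - s j) = 0 := hs x _ (fun h => ht
      ⟨by linarith [h.1, hspos j], by linarith [h.2, hsle j]⟩)
    simp only [F, h1, h2]; simp
  have hFb : ∀ j, ∀ x ∈ Set.Icc (0:ℝ) 1, ∀ t ∈ Set.Icc a (b + 1), |F j (x, t)| ≤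
      max B 0 * D + L * D := by
    intro j x hx t ht
    refine (abs_sub _ _).trans ?_
    simp only [abs_mul]
    gcongr
    · exact hB0 x hx t ht
    · rw [abs_div, abs_of_pos (hspos j), div_le_iff₀ (hspos j)]
      refine (hφt x hx _ _).trans ?_
      rw [sub_sub_cancel_left, abs_neg, abs_of_pos (hspos j)]
    · rw [abs_div, abs_of_pos (hspos j), div_le_iff₀ (hspos j)]
      refine (hvt x _ _).trans ?_
      rw [add_sub_cancel_left, abs_of_pos (hspos j)]
    · exact hφb x hx t
  have hae : ∀ᵐ z ∂mu, DifferentiableAt ℝ (fun t' => v z.1 t') z.2 := by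
    unfold mu
    have hm : MeasurableSet {z : ℝ × ℝ | DifferentiableAt ℝ (v z.1) z.2} :=
      measurableSet_of_differentiableAt_with_param ℝ (f := v) hvc
    have := (Measure.ae_prod_iff_ae_ae (μ := volume.restrict (Set.Ioc (0:ℝ) 1)) (ν := volume)
      (p := fun z : ℝ × ℝ => DifferentiableAt ℝ (v z.1) z.2) hm).2
    apply this
    refine Eventually.of_forall fun x => ?_
    have hl : LipschitzWith L.toNNReal (v x) := LipschitzWith.of_dist_le_mul fun t s => by
      rw [Real.dist_eq, Real.dist_eq, Real.coe_toNNReal _ hL]; exact hvt x t s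
    exact hl.ae_differentiableAt_real
  have hlim := tendsto_integral_of_dominated_convergence (μ := mu) (F := F)
    (f := fun z => v z.1 z.2 * (-deriv (fun t' => φ z.1 t') z.2)
      - deriv (fun t' => v z.1 t') z.2 * φ z.1 z.2) _
    (fun j => (hFm j).aestronglyMeasurable) (mu_dom a (b + 1) (max B 0 * D + L * D))
    (fun j => mu_bound (hFb j) (hs0 j)) (by
      filter_upwards [hae] with z hz
      exact ((back_seq (hdt z.1 z.2) hs1 (fun j => (hspos j).ne')).const_mul _).sub
        ((slope_seq hz.hasDerivAt hs1 (fun j => (hspos j).ne')).mul_const _))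
  have hzero : ∀ j, ∫ z, F j z ∂mu = 0 := by
    intro j
    let X : ℝ × ℝ → ℝ := fun z => v z.1 z.2 * φ z.1 (z.2 - s j)
    have c1 : Continuous (fun z : ℝ × ℝ => φ z.1 (z.2 - s j)) :=
      hφc.comp (continuous_fst.prodMk (continuous_snd.sub continuous_const))
    have hX : Integrable X mu := by
      refine mu_intg (α := a) (β := b + 1) (D := max B 0 * D) (hvc.mul c1).measurable ?_ ?_
      · intro x hx t ht
        simp only [X, abs_mul]
        gcongr
        · exact hB0 x hx t ht
        · exact hφb x hx _
      · intro x t ht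
        have h2 : φ x (t - s j) = 0 := hs x _ (fun h => ht
          ⟨by linarith [h.1, hspos j], by linarith [h.2, hsle j]⟩)
        simp [X, h2]
    have e : F j = fun z => (1 / s j) * (X z - X (z.1, z.2 + s j)) := by
      ext z
      simp only [F, X, add_sub_cancel_right]
      ring
    rw [e, integral_const_mul, integral_sub hX (mu_intg_t hX _), mu_int_t X]
    simp
  simp only [hzero] at hlim
  exact tendsto_nhds_unique hlim tendsto_const_nhds |>.symm ▸ rfl

open Filter Topology in
lemma weak_limit {T R C M B0 B1 : ℝ} (hR : 0 < R) (hC : 0 ≤ C) (hM : 0 ≤ M)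
    (hB0 : 0 ≤ B0) (hB1 : 0 ≤ B1) {N : ℕ → ℕ} (hN : ∀ j, 0 < N j)
    (hNt : Tendsto (fun j => 1 / (N j : ℝ)) atTop (𝓝 0)) {G U0 : ℕ → ℤ → ℝ}
    (hG : ∀ j i, |G j i| ≤ M)
    (hper : ∀ j k i, sch R (N j) (G j) (U0 j) k (i + N j) = sch R (N j) (G j) (U0 j) k i)
    (hpb : ∀ j x t, |pap (N j) (sch R (N j) (G j) (U0 j)) x t| ≤ C)
    (hub : ∀ j, ∀ x ∈ Set.Icc (0:ℝ) 1, ∀ t,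
      |uap (N j) (sch R (N j) (G j) (U0 j)) x t| ≤ B0 + B1 * |t|)
    {v q : ℝ → ℝ → ℝ} {g : ℝ → ℝ}
    (hv : ∀ x t, Tendsto (fun j => uap (N j) (sch R (N j) (G j) (U0 j)) x t) atTop (𝓝 (v x t)))
    (hq : ∀ x t, Tendsto (fun j => pap (N j) (sch R (N j) (G j) (U0 j)) x t) atTop (𝓝 (q x t)))
    (hg : ∀ᵐ x ∂(volume.restrict (Set.Ioc (0:ℝ) 1)),
      Tendsto (fun j => G j ⌊(N j : ℝ) * x⌋) atTop (𝓝 (g x)))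
    {φ : ℝ → ℝ → ℝ} (hφ : IsTest T φ) :
    ∫ z, (v z.1 z.2 * (-deriv (fun t' => φ z.1 t') z.2)
      + AA R (q z.1 z.2) * deriv (fun x' => φ x' z.2) z.1
      - g z.1 * bb R (q z.1 z.2) * φ z.1 z.2) ∂mu = 0 := by
  have hφc := hφ.1.continuous
  have hφ01 := hφ.2.2
  obtain ⟨a, b, D, ha, hb, hD, hs, hφb, hφx, hφt, hdx, hdt, hdxb, hdtb, hdxm, hdtm⟩ := test_facts hφ
  set u : ℕ → ℝ → ℝ → ℝ := fun j => uap (N j) (sch R (N j) (G j) (U0 j)) with hu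
  set p : ℕ → ℝ → ℝ → ℝ := fun j => pap (N j) (sch R (N j) (G j) (U0 j)) with hp
  have hNpos : ∀ j, (0:ℝ) < N j := fun j => by exact_mod_cast hN j
  have hN1 : ∀ j, (1:ℝ) ≤ N j := fun j => by exact_mod_cast hN j
  let h : ℕ → ℝ := fun j => 1 / (N j : ℝ)
  let τ : ℕ → ℝ := fun j => 1 / (4 * (N j : ℝ) ^ 2)
  have hhpos : ∀ j, 0 < h j := fun j => by have := hNpos j; positivity
  have hhle : ∀ j, h j ≤ 1 := fun j => by
    simp only [h]; rw [div_le_one (hNpos j)]; exact hN1 j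
  have hτpos : ∀ j, 0 < τ j := fun j => by have := hNpos j; positivity
  have hτle : ∀ j, τ j ≤ h j := fun j => by
    apply one_div_le_one_div_of_le (hNpos j)
    nlinarith [hN1 j]
  have hτ0 : Tendsto τ atTop (𝓝 0) :=
    squeeze_zero (fun j => (hτpos j).le) hτle hNt
  -- periodic extension of the test function
  let P : ℝ → ℝ → ℝ := fun x t => φ (Int.fract x) t
  have hfr : ∀ x : ℝ, Int.fract x ∈ Set.Icc (0:ℝ) 1 := fun x =>
    ⟨Int.fract_nonneg x, (Int.fract_lt_one x).le⟩
  have hPm : Measurable (fun z : ℝ × ℝ => P z.1 z.2) :=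
    hφc.measurable.comp ((measurable_fract.comp measurable_fst).prodMk measurable_snd)
  have hPm' : ∀ c d : ℝ, Measurable (fun z : ℝ × ℝ => P (z.1 + c) (z.2 + d)) := fun c d =>
    hPm.comp ((measurable_fst.add_const c).prodMk (measurable_snd.add_const d))
  have hPb : ∀ x t, |P x t| ≤ D := fun x t => hφb _ (hfr x) t
  have hPs : ∀ x t, t ∉ Set.Icc a b → P x t = 0 := fun x t => hs _ t
  have hPper : ∀ x t, P (x + 1) t = P x t := fun x t => by simp only [P, Int.fract_add_one]
  have hum : ∀ j, Measurable (fun z : ℝ × ℝ => u j z.1 z.2) := fun j => uap_meas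
  have hpm : ∀ j, Measurable (fun z : ℝ × ℝ => p j z.1 z.2) := fun j => pap_meas
  have hAm := (AA_cont R).measurable
  have hbm := (bb_cont R).measurable
  let F : ℕ → ℝ × ℝ → ℝ := fun j z =>
    u j z.1 z.2 * ((P z.1 (z.2 - τ j) - P z.1 z.2) / τ j)
      + AA R (p j z.1 z.2) * ((P (z.1 + h j) z.2 - P z.1 z.2) / h j)
      - G j ⌊(N j : ℝ) * z.1⌋ * bb R (p j z.1 z.2) * P z.1 z.2
  have hPm1 : ∀ j, Measurable (fun z : ℝ × ℝ => P z.1 (z.2 - τ j)) := fun j => by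
    simpa [sub_eq_add_neg] using hPm' 0 (-τ j)
  have hPm2 : ∀ j, Measurable (fun z : ℝ × ℝ => P (z.1 + h j) z.2) := fun j => by
    simpa using hPm' (h j) 0
  have hGm : ∀ j, Measurable (fun z : ℝ × ℝ => G j ⌊(N j : ℝ) * z.1⌋) := fun j =>
    (measurable_of_countable (G j)).comp (Int.measurable_floor.comp (by fun_prop))
  have hFm : ∀ j, Measurable (F j) := by
    intro j
    exact (((hum j).mul (((hPm1 j).sub hPm).div_const _)).add
      ((hAm.comp (hpm j)).mul (((hPm2 j).sub hPm).div_const _))).sub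
      (((hGm j).mul (hbm.comp (hpm j))).mul hPm)
  have hPs' : ∀ j x t, t ∉ Set.Icc a (b + 1) → P x (t - τ j) = 0 := fun j x t ht =>
    hPs x _ (fun hh => ht ⟨by linarith [hh.1, hτpos j], by linarith [hh.2, hτle j, hhle j]⟩)
  have hPs'' : ∀ x t, t ∉ Set.Icc a (b + 1) → P x t = 0 := fun x t ht =>
    hPs x _ (fun hh => ht ⟨hh.1, by linarith [hh.2]⟩)
  have hs0 : ∀ j x t, t ∉ Set.Icc a (b + 1) → F j (x, t) = 0 := by
    intro j x t ht
    simp only [F, hPs' j x t ht, hPs'' _ t ht]; simp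
  have hAb : ∀ j x t, |AA R (p j x t)| ≤ C := fun j x t => (AA_abs hR _).trans (hpb j x t)
  have hub' : ∀ j, ∀ x ∈ Set.Icc (0:ℝ) 1, ∀ t ∈ Set.Icc a (b + 1),
      |u j x t| ≤ B0 + B1 * (|a| + |b + 1|) := by
    intro j x hx t ht
    refine (hub j x hx t).trans ?_
    gcongr
    refine (abs_le_max_abs_abs ht.1 ht.2).trans ?_
    exact max_le (by linarith [abs_nonneg (b + 1)]) (by linarith [abs_nonneg a])
  have hBn : 0 ≤ B0 + B1 * (|a| + |b + 1|) := by positivity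
  have hFb : ∀ j, ∀ x ∈ Set.Icc (0:ℝ) 1, ∀ t ∈ Set.Icc a (b + 1), |F j (x, t)| ≤
      (B0 + B1 * (|a| + |b + 1|)) * D + C * D + M * (1 + R) * D := by
    intro j x hx t ht
    refine (abs_sub _ _).trans (add_le_add ((abs_add_le _ _).trans (add_le_add ?_ ?_)) ?_)
    · simp only [abs_mul]
      gcongr
      · exact hub' j x hx t ht
      · rw [abs_div, abs_of_pos (hτpos j), div_le_iff₀ (hτpos j)]
        refine (hφt _ (hfr x) _ _).trans ?_
        rw [sub_sub_cancel_left, abs_neg, abs_of_pos (hτpos j)]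
    · simp only [abs_mul]
      gcongr
      · exact hAb j x t
      · rw [abs_div, abs_of_pos (hhpos j), div_le_iff₀ (hhpos j)]
        exact per_lip hD (hφx t) (hφ01 t) x (hhpos j).le (hhle j)
    · simp only [abs_mul]
      gcongr
      · exact hG j _
      · exact bb_abs hR _
      · exact hPb x t
  have hg' : ∀ᵐ z ∂mu, Tendsto (fun j => G j ⌊(N j : ℝ) * z.1⌋) atTop (𝓝 (g z.1)) :=
    Measure.quasiMeasurePreserving_fst.ae hg
  have hlim := tendsto_integral_of_dominated_convergence (μ := mu) (F := F)
    (f := fun z => v z.1 z.2 * (-deriv (fun t' => φ z.1 t') z.2)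
      + AA R (q z.1 z.2) * deriv (fun x' => φ x' z.2) z.1
      - g z.1 * bb R (q z.1 z.2) * φ z.1 z.2) _
    (fun j => (hFm j).aestronglyMeasurable)
    (mu_dom a (b + 1) ((B0 + B1 * (|a| + |b + 1|)) * D + C * D + M * (1 + R) * D))
    (fun j => mu_bound (hFb j) (hs0 j)) (by
      filter_upwards [hg', ae_mu_mem] with z hz hz1
      have hfz : Int.fract z.1 = z.1 := Int.fract_eq_self.2 ⟨hz1.1.le, hz1.2⟩
      have hP : ∀ t, P z.1 t = φ z.1 t := fun t => by simp only [P, hfz]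
      have t1 : Tendsto (fun j => (P z.1 (z.2 - τ j) - P z.1 z.2) / τ j) atTop
          (𝓝 (-deriv (fun t' => φ z.1 t') z.2)) := by
        simp only [hP]
        exact back_seq (hdt z.1 z.2) hτ0 (fun j => (hτpos j).ne')
      have t2 : Tendsto (fun j => (P (z.1 + h j) z.2 - P z.1 z.2) / h j) atTop
          (𝓝 (deriv (fun x' => φ x' z.2) z.1)) := by
        refine (slope_seq (hdx z.1 z.2) hNt (fun j => (hhpos j).ne')).congr' ?_
        have : ∀ᶠ j in atTop, 1 / (N j : ℝ) < 1 - z.1 :=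
          hNt.eventually (gt_mem_nhds (by linarith [hz1.2]))
        filter_upwards [this] with j hj
        have hf2 : Int.fract (z.1 + h j) = z.1 + h j :=
          Int.fract_eq_self.2 ⟨by linarith [hhpos j, hz1.1], by simp only [h]; linarith⟩
        simp only [P, hfz, hf2]
        rfl
      have t3 := ((AA_cont R).tendsto _).comp (hq z.1 z.2)
      have t4 := ((bb_cont R).tendsto _).comp (hq z.1 z.2)
      have := (((hv z.1 z.2).mul t1).add (t3.mul t2)).sub ((hz.mul t4).mul_const (φ z.1 z.2))
      refine this.congr fun j => ?_
      simp only [F, hP, Function.comp_apply, hu, hp])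
  have hzero : ∀ j, ∫ z, F j z ∂mu = 0 := by
    intro j
    let X : ℝ × ℝ → ℝ := fun z => u j z.1 z.2 * P z.1 (z.2 - τ j)
    let Y : ℝ × ℝ → ℝ := fun z => AA R (p j z.1 z.2) * P (z.1 + h j) z.2
    have hX : Integrable X mu := by
      refine mu_intg (α := a) (β := b + 1) (D := (B0 + B1 * (|a| + |b + 1|)) * D)
        ((hum j).mul (hPm1 j)) ?_ ?_
      · intro x hx t ht
        simp only [X, abs_mul]
        gcongr
        · exact hub' j x hx t ht
        · exact hPb x _
      · intro x t ht
        simp [X, hPs' j x t ht]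
    have hY : Integrable Y mu := by
      refine mu_intg (α := a) (β := b + 1) (D := C * D) ((hAm.comp (hpm j)).mul (hPm2 j)) ?_ ?_
      · intro x hx t ht
        simp only [Y, abs_mul]
        gcongr
        · exact hAb j x t
        · exact hPb _ _
      · intro x t ht
        simp [Y, hPs'' _ t ht]
    have hY' : Integrable (fun z : ℝ × ℝ => Y (z.1 - h j, z.2)) mu := by
      have hYm : Measurable Y := (hAm.comp (hpm j)).mul (hPm2 j)
      refine mu_intg (α := a) (β := b + 1) (D := C * D)
        (hYm.comp ((measurable_fst.sub_const _).prodMk measurable_snd)) ?_ ?_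
      · intro x hx t ht
        simp only [Y, abs_mul]
        gcongr
        · exact hAb j _ t
        · exact hPb _ _
      · intro x t ht
        simp [Y, hPs'' _ t ht]
    have e : F j = fun z => (1 / τ j) * (X z - X (z.1, z.2 + τ j))
        + (1 / h j) * (Y z - Y (z.1 - h j, z.2)) := by
      ext z
      by_cases ht : z.2 ∈ Set.Icc a b
      · have hsch := uap_scheme (R := R) (G := G j) (U0 := U0 j) (hN j) z.1 z.2 (ha.le.trans ht.1)
        have hsch' : u j z.1 (z.2 + τ j) - u j z.1 z.2 = τ j * ((N j : ℝ) * (AA R (p j z.1 z.2)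
          - AA R (p j (z.1 - h j) z.2)) + G j ⌊(N j : ℝ) * z.1⌋ * bb R (p j z.1 z.2)) := hsch
        have hNh : (N j : ℝ) = 1 / h j := by simp only [h, one_div_one_div]
        have hsch2 : G j ⌊(N j : ℝ) * z.1⌋ * bb R (p j z.1 z.2) =
          (u j z.1 (z.2 + τ j) - u j z.1 z.2) / τ j - 1 / h j * (AA R (p j z.1 z.2)
          - AA R (p j (z.1 - h j) z.2)) := by
          rw [hsch', mul_div_cancel_left₀ _ (hτpos j).ne', ← hNh]; ring
        simp only [F, X, Y, add_sub_cancel_right, sub_add_cancel]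
        rw [hsch2]
        ring
      · have hz : ∀ x, P x z.2 = 0 := fun x => hPs x _ ht
        simp only [F, X, Y, add_sub_cancel_right, hz]
        ring
    have i1 : Integrable (fun z : ℝ × ℝ => 1 / τ j * (X z - X (z.1, z.2 + τ j))) mu :=
      (hX.sub (mu_intg_t hX _)).const_mul _
    have i2 : Integrable (fun z : ℝ × ℝ => 1 / h j * (Y z - Y (z.1 - h j, z.2))) mu :=
      (hY.sub hY').const_mul _
    rw [e, integral_add i1 i2, integral_const_mul, integral_const_mul, integral_sub hX (mu_intg_t hX _), mu_int_t X,
      integral_sub hY hY', mu_int_x hY hY']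
    · simp
    · intro x t
      have h1 : p j (x + 1) t = p j x t := pap_per (hper j) x t
      have h2 : x + 1 + h j = (x + h j) + 1 := by ring
      simp only [Y, h1, h2, hPper]
  simp only [hzero] at hlim
  exact tendsto_nhds_unique hlim tendsto_const_nhds

/-- cell averages of the forcing, extended periodically -/
def cav (g : ℝ → ℝ) (n : ℕ) (i : ℤ) : ℝ :=
  ⨍ y in Metric.closedBall ((((i % (n:ℤ) : ℤ) : ℝ) + 1 / 2) / n) (1 / (2 * (n:ℝ))), g y

lemma cav_per (g : ℝ → ℝ) (n : ℕ) (i : ℤ) : cav g n (i + n) = cav g n i := by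
  unfold cav
  rw [Int.add_emod_right]

lemma cav_bd {g : ℝ → ℝ} {M : ℝ} (hg : ∀ x, |g x| ≤ M) (n : ℕ) (i : ℤ) : |cav g n i| ≤ M := by
  unfold cav
  have hM : 0 ≤ M := (abs_nonneg _).trans (hg 0)
  rw [setAverage_eq, smul_eq_mul, abs_mul]
  set B := Metric.closedBall ((((i % (n:ℤ) : ℤ) : ℝ) + 1 / 2) / n) (1 / (2 * (n:ℝ)))
  have h1 := norm_setIntegral_le_of_norm_le_const (μ := volume) (s := B) (f := g) (C := M)
    measure_closedBall_lt_top (fun x _ => hg x)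
  rw [Real.norm_eq_abs] at h1
  have h2 : 0 ≤ volume.real B := measureReal_nonneg
  rw [abs_inv, abs_of_nonneg h2]
  rcases h2.eq_or_lt with h | h
  · rw [← h]; simpa using hM
  · rw [inv_mul_le_iff₀ h, mul_comm]; exact h1

open Filter Topology in
lemma cav_tendsto {g : ℝ → ℝ} {M : ℝ} (hgm : Measurable g) (hg : ∀ x, |g x| ≤ M)
    {N : ℕ → ℕ} (hN : ∀ j, 0 < N j) (hNt : Tendsto (fun j => 1 / (N j : ℝ)) atTop (𝓝 0)) :
    ∀ᵐ x ∂(volume.restrict (Set.Ioc (0:ℝ) 1)),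
      Tendsto (fun j => cav g (N j) ⌊(N j : ℝ) * x⌋) atTop (𝓝 (g x)) := by
  have hloc : LocallyIntegrable g volume := by
    rw [locallyIntegrable_iff]
    intro k hk
    exact Measure.integrableOn_of_bounded (M := M) hk.measure_lt_top.ne
      hgm.aestronglyMeasurable (Eventually.of_forall fun x => hg x)
  have h1 : ∀ᵐ x ∂(volume.restrict (Set.Ioc (0:ℝ) 1)), x ∈ Set.Ioc (0:ℝ) 1 :=
    ae_restrict_mem measurableSet_Ioc
  have h2 : ∀ᵐ x ∂(volume.restrict (Set.Ioc (0:ℝ) 1)), x ≠ (1:ℝ) :=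
    ae_restrict_of_ae (Measure.ae_ne volume 1)
  filter_upwards [h1, h2,
    ae_restrict_of_ae (IsUnifLocDoublingMeasure.ae_tendsto_average volume hloc 1)] with x hx hx1 hx2
  have hlt : x < 1 := lt_of_le_of_ne hx.2 hx1
  refine hx2 (fun j => (((⌊(N j : ℝ) * x⌋ % (N j : ℤ) : ℤ) : ℝ) + 1 / 2) / N j)
    (fun j => 1 / (2 * (N j : ℝ))) ?_ ?_
  · refine tendsto_nhdsWithin_iff.2 ⟨?_, Eventually.of_forall fun j => ?_⟩
    · have := hNt.mul_const (1 / 2)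
      rw [zero_mul] at this
      refine this.congr fun j => ?_
      rw [one_div_mul_one_div, mul_comm]
    · have : (0:ℝ) < N j := by exact_mod_cast hN j
      exact Set.mem_Ioi.2 (by positivity)
  · refine Eventually.of_forall fun j => ?_
    have hn : (0:ℝ) < N j := by exact_mod_cast hN j
    have e : ⌊(N j : ℝ) * x⌋ % (N j : ℤ) = ⌊(N j : ℝ) * x⌋ := by
      apply Int.emod_eq_of_lt
      · exact Int.floor_nonneg.2 (mul_nonneg hn.le hx.1.le)
      · rw [Int.floor_lt]; push_cast; nlinarith
    rw [e, Metric.mem_closedBall, Real.dist_eq, one_mul]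
    have h3 := Int.floor_le ((N j : ℝ) * x)
    have h4 := Int.lt_floor_add_one ((N j : ℝ) * x)
    have e2 : x - ((⌊(N j : ℝ) * x⌋ : ℝ) + 1 / 2) / N j =
      ((N j : ℝ) * x - ⌊(N j : ℝ) * x⌋ - 1 / 2) / N j := by
      field_simp; ring
    rw [e2, abs_div, abs_of_pos hn, div_le_div_iff₀ hn (by positivity)]
    have : |(N j : ℝ) * x - ⌊(N j : ℝ) * x⌋ - 1 / 2| ≤ 1 / 2 := by
      rw [abs_le]; constructor <;> linarith
    nlinarith

lemma weak_final {T R C M L : ℝ} (hT : 0 < T) (hR : 0 < R) (hC : 0 ≤ C) {v q : ℝ → ℝ → ℝ} {g : ℝ → ℝ}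
    {φ : ℝ → ℝ → ℝ} (hφ : IsTest T φ) (hgm : Measurable g) (hg : ∀ x, |g x| ≤ M)
    (hL : 0 ≤ L)
    (hvt : ∀ x t s, |v x t - v x s| ≤ L * |t - s|)
    (hvc : Continuous (fun z : ℝ × ℝ => v z.1 z.2))
    (hqm : Measurable (fun z : ℝ × ℝ => q z.1 z.2))
    (hqC : ∀ x t, |q x t| ≤ C)
    (hqR : ∀ x, ∀ t ∈ Set.Icc (0:ℝ) T, |q x t| ≤ R)
    (hut : ∀ x t, |deriv (fun t' => v x t') t| ≤ L)
    (hw : ∫ z, (v z.1 z.2 * (-deriv (fun t' => φ z.1 t') z.2)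
      + AA R (q z.1 z.2) * deriv (fun x' => φ x' z.2) z.1
      - g z.1 * bb R (q z.1 z.2) * φ z.1 z.2) ∂mu = 0) :
    (∫ t in (0:ℝ)..T, ∫ x in (0:ℝ)..1,
      (deriv (fun t' => v x t') t * φ x t + Real.arctan (q x t) * deriv (fun x' => φ x' t) x
        - g x * Real.sqrt (1 + (q x t) ^ 2) * φ x t)) = 0 := by
  have hM : 0 ≤ M := (abs_nonneg _).trans (hg 0)
  have hib := ibp_t hφ hvt hvc
  have hφc := hφ.1.continuous
  obtain ⟨a, b, D, ha, hb, hD, hs, hφb, hφx, hφt, hdx, hdt, hdxb, hdtb, hdxm, hdtm⟩ := test_facts hφ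
  have hdx0 : ∀ x t, t ∉ Set.Icc a b → deriv (fun x' => φ x' t) x = 0 := by
    intro x t ht
    have : (fun x' => φ x' t) = fun _ => 0 := by ext y; exact hs y t ht
    rw [this]; simp
  have hutm : Measurable (fun z : ℝ × ℝ => deriv (fun t' => v z.1 t') z.2) :=
    measurable_deriv_with_param (f := fun x t => v x t) hvc
  -- the integrand of the final identity, with truncated nonlinearities
  let H : ℝ × ℝ → ℝ := fun z => deriv (fun t' => v z.1 t') z.2 * φ z.1 z.2
    + AA R (q z.1 z.2) * deriv (fun x' => φ x' z.2) z.1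
    - g z.1 * bb R (q z.1 z.2) * φ z.1 z.2
  have hHm : Measurable H :=
    ((hutm.mul hφc.measurable).add (((AA_cont R).measurable.comp hqm).mul hdxm)).sub
      (((hgm.comp measurable_fst).mul ((bb_cont R).measurable.comp hqm)).mul hφc.measurable)
  have hH0 : ∀ x t, t ∉ Set.Icc a b → H (x, t) = 0 := by
    intro x t ht
    simp only [H, hs x t ht, hdx0 x t ht]; simp
  have hHi : Integrable H mu := by
    refine mu_intg (α := a) (β := b) (D := L * D + C * D + M * (1 + R) * D) hHm ?_ hH0
    intro x hx t ht
    refine (abs_sub _ _).trans (add_le_add ((abs_add_le _ _).trans (add_le_add ?_ ?_)) ?_)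
    · simp only [abs_mul]
      gcongr
      · exact hut x t
      · exact hφb x hx t
    · simp only [abs_mul]
      gcongr
      · exact (AA_abs hR _).trans (hqC x t)
      · exact hdxb x hx t
    · simp only [abs_mul]
      gcongr
      · exact hg x
      · exact bb_abs hR _
      · exact hφb x hx t
  let I : ℝ × ℝ → ℝ := fun z => v z.1 z.2 * (-deriv (fun t' => φ z.1 t') z.2)
    - deriv (fun t' => v z.1 t') z.2 * φ z.1 z.2
  have hdt0 : ∀ x t, t ∉ Set.Icc a b → deriv (fun t' => φ x t') t = 0 := by
    intro x t ht
    have : (fun t' => φ x t') =ᶠ[nhds t] fun _ => 0 := by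
      filter_upwards [isClosed_Icc.isOpen_compl.mem_nhds ht] with s hs'
      exact hs x s hs'
    rw [this.deriv_eq]; simp
  obtain ⟨B, hB⟩ := (isCompact_Icc.prod isCompact_Icc :
    IsCompact (Set.Icc (0:ℝ) 1 ×ˢ Set.Icc a b)).exists_bound_of_continuousOn hvc.continuousOn
  have hIi : Integrable I mu := by
    refine mu_intg (α := a) (β := b) (D := |B| * D + L * D)
      ((hvc.measurable.mul hdtm.neg).sub (hutm.mul hφc.measurable)) ?_ ?_
    · intro x hx t ht
      refine (abs_sub _ _).trans (add_le_add ?_ ?_)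
      · simp only [abs_mul, abs_neg]
        exact mul_le_mul ((hB (x, t) ⟨hx, ht⟩).trans (le_abs_self _)) (hdtb x hx t)
          (abs_nonneg _) (abs_nonneg _)
      · simp only [abs_mul]
        gcongr
        · exact hut x t
        · exact hφb x hx t
    · intro x t ht
      simp only [I, hs x t ht, hdt0 x t ht]; simp
  have hH : ∫ z, H z ∂mu = 0 := by
    have e : ∀ z : ℝ × ℝ, v z.1 z.2 * (-deriv (fun t' => φ z.1 t') z.2)
      + AA R (q z.1 z.2) * deriv (fun x' => φ x' z.2) z.1
      - g z.1 * bb R (q z.1 z.2) * φ z.1 z.2 = H z + I z := fun z => by simp only [H, I]; ring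
    simp only [e] at hw
    rw [integral_add hHi hIi] at hw
    have : ∫ z, I z ∂mu = 0 := hib
    linarith
  unfold mu at hH hHi
  rw [integral_prod_symm _ hHi] at hH
  have hsup : ∀ t ∉ Set.Ioc (0:ℝ) T, ∫ x in Set.Ioc (0:ℝ) 1, H (x, t) = 0 := by
    intro t ht
    have : t ∉ Set.Icc a b := fun hh => ht ⟨ha.trans_le hh.1, hh.2.trans hb.le⟩
    simp [hH0 _ t this]
  rw [← setIntegral_eq_integral_of_forall_compl_eq_zero hsup] at hH
  rw [intervalIntegral.integral_of_le hT.le]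
  refine Eq.trans ?_ hH
  refine setIntegral_congr_fun measurableSet_Ioc fun t ht => ?_
  rw [intervalIntegral.integral_of_le zero_le_one]
  refine setIntegral_congr_fun measurableSet_Ioc fun x hx => ?_
  have := hqR x t ⟨ht.1.le, ht.2⟩
  simp only [H, AA_eq this, bb_eq this]

open Filter Topology in
theorem main_result
    (u₀ u₀' : ℝ → ℝ) (K₀ : ℝ)
    (hu₀d : ∀ x ∈ Set.Icc (0:ℝ) 1, HasDerivAt u₀ (u₀' x) x)
    (hu₀lip : LipschitzOnWith (Real.toNNReal K₀) u₀' (Set.Icc (0:ℝ) 1))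
    (hbc : u₀ 0 = u₀ 1) (hbc' : u₀' 0 = u₀' 1)
    (M : ℝ) (hM : 0 < M) :
    ∃ T > (0:ℝ), ∀ g : ℝ → ℝ, Measurable g → (∀ x, |g x| ≤ M) →
      ∃ (u ut ux uxx : ℝ → ℝ → ℝ) (L M' : ℝ),
        IsWeakSol g T u ut ux uxx L M' ∧ ∀ x ∈ Set.Icc (0:ℝ) 1, u x 0 = u₀ x := by
  obtain ⟨K, hKdef⟩ : ∃ K : ℝ, K = (Real.toNNReal K₀ : ℝ) := ⟨_, rfl⟩
  have hK : 0 ≤ K := by rw [hKdef]; positivity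
  have hl : ∀ x ∈ Set.Icc (0:ℝ) 1, ∀ y ∈ Set.Icc (0:ℝ) 1, |u₀' x - u₀' y| ≤ K * |x - y| := by
    intro x hx y hy
    have := hu₀lip.dist_le_mul x hx y hy
    rw [Real.dist_eq, Real.dist_eq] at this
    rw [hKdef]; exact this
  have h0mem : (0:ℝ) ∈ Set.Icc (0:ℝ) 1 := ⟨le_rfl, zero_le_one⟩
  obtain ⟨R0, hR0def⟩ : ∃ R0 : ℝ, R0 = |u₀' 0| + K := ⟨_, rfl⟩
  have hR0 : 0 ≤ R0 := by rw [hR0def]; positivity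
  have hR0b : ∀ x ∈ Set.Icc (0:ℝ) 1, |u₀' x| ≤ R0 := by
    intro x hx
    have h1 := hl x hx 0 h0mem
    rw [sub_zero, abs_of_nonneg hx.1] at h1
    have h2 := abs_add_le (u₀' x - u₀' 0) (u₀' 0)
    rw [sub_add_cancel] at h2
    have h3 : K * x ≤ K := mul_le_of_le_one_right hK hx.2
    linarith
  obtain ⟨R, hRdef⟩ : ∃ R : ℝ, R = R0 + 1 := ⟨_, rfl⟩
  have hR : 0 < R := by linarith
  obtain ⟨L, hLdef⟩ : ∃ L : ℝ, L = K + M * (1 + R) := ⟨_, rfl⟩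
  have hL : 0 < L := by rw [hLdef]; positivity
  obtain ⟨C, hCdef⟩ : ∃ C : ℝ, C = (1 + R ^ 2) * ((K + M * (1 + R)) + M * (1 + R)) := ⟨_, rfl⟩
  have hC : 0 < C := by rw [hCdef]; positivity
  obtain ⟨δ, hδdef⟩ : ∃ δ : ℝ, δ = 1 / (4 * C) := ⟨_, rfl⟩
  have hδ : 0 < δ := by rw [hδdef]; positivity
  have hδC : C * δ = 1 / 4 := by rw [hδdef]; field_simp
  obtain ⟨T, hTdef⟩ : ∃ T : ℝ, T = δ / (4 * L) := ⟨_, rfl⟩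
  have hT : 0 < T := by rw [hTdef]; positivity
  have hTL : L * T = δ / 4 := by rw [hTdef]; field_simp
  refine ⟨T, hT, fun g hgm hg => ?_⟩
  -- mesh sizes
  obtain ⟨N₀, hN₀⟩ := exists_nat_ge (M * (1 + R ^ 2))
  let N : ℕ → ℕ := fun j => N₀ + j + 1
  have hN : ∀ j, 0 < N j := fun j => Nat.succ_pos _
  have hN' : ∀ j, (0:ℝ) < N j := fun j => by exact_mod_cast hN j
  have hNM : ∀ j, M ≤ (N j : ℝ) * (1 / (1 + R ^ 2)) := by
    intro j
    rw [mul_one_div, le_div_iff₀ (by positivity)]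
    refine hN₀.trans ?_
    simp only [N]; push_cast
    have : (0:ℝ) ≤ j := Nat.cast_nonneg j
    linarith
  have hNt : Tendsto (fun j => 1 / (N j : ℝ)) atTop (𝓝 0) := by
    have h1 : Tendsto N atTop atTop :=
      tendsto_atTop_mono (fun j => show j ≤ N₀ + j + 1 by omega) tendsto_id
    exact tendsto_one_div_atTop_nhds_zero_nat.comp h1
  have hε1 : ∀ j, 1 / (N j : ℝ) ≤ 1 := fun j => by
    rw [div_le_one (hN' j)]; exact_mod_cast hN j
  let G : ℕ → ℤ → ℝ := fun j => cav g (N j)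
  let U0 : ℕ → ℤ → ℝ := fun j i => u₀ (Int.fract ((i:ℝ) / N j))
  have hG : ∀ j i, |G j i| ≤ M := fun j i => cav_bd hg _ _
  have hU0per : ∀ j i, U0 j (i + N j) = U0 j i := by
    intro j i
    simp only [U0]
    have : (((i + N j : ℤ)) : ℝ) / N j = (i:ℝ) / N j + 1 := by
      have := (hN' j).ne'
      push_cast; field_simp
    rw [this, Int.fract_add_one]
  have hU0 : ∀ j i, |N j * (U0 j (i + 1) - U0 j i) - N j * (U0 j i - U0 j (i - 1))| ≤ K / N j :=
    fun j i => start_second hK hu₀d hbc hbc' hl (hN j) i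
  let S : ℕ → ℕ → ℤ → ℝ := fun j => sch R (N j) (G j) (U0 j)
  have hSper : ∀ j k i, S j k (i + N j) = S j k i := fun j k i =>
    sch_per (fun i => cav_per g _ i) (hU0per j) k i
  have hSt : ∀ j k i, |S j (k + 1) i - S j k i| ≤ L * (1 / (4 * (N j : ℝ) ^ 2)) := by
    intro j k i
    rw [hLdef]
    exact sch_step hR (hN j) (hNM j) (hG j) (hU0 j) k i
  have hSV : ∀ j k i, |N j * (S j k (i + 1) - S j k i) - N j * (S j k i - S j k (i - 1))| ≤ C / N j := by
    intro j k i
    rw [hCdef]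
    exact sch_second hR (hN j) (hNM j) (hG j) (hU0 j) k i
  have hSb : ∀ j k i, |N j * (S j k (i + 1) - S j k i)| ≤ C := fun j k i =>
    disc_bd (hN j) hC.le (hSV j k) (hSper j k) i
  let u : ℕ → ℝ → ℝ → ℝ := fun j => uap (N j) (S j)
  let p : ℕ → ℝ → ℝ → ℝ := fun j => pap (N j) (S j)
  have hu00 : ∀ j x, u j x 0 = u₀ (Int.fract ((⌊(N j : ℝ) * x⌋ : ℝ) / N j)) := by
    intro j x
    simp [u, uap, S, sch, U0]
  have hp00 : ∀ j x, |p j x 0| ≤ R0 := by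
    intro j x
    have := start_slope hu₀d hbc hR0b (hN j) ⌊(N j : ℝ) * x⌋
    simpa [p, pap, S, sch, U0] using this
  have hut : ∀ j x t s, |u j x t - u j x s| ≤ L * (|t - s| + 1 / N j) := fun j x t s =>
    uap_t (hN j) hL.le (hSt j) x t s
  have hux : ∀ j t x y, |u j x t - u j y t| ≤ C * (|x - y| + 1 / N j) := fun j t x y =>
    uap_x (hN j) hC.le (hSb j) t x y
  have hpx : ∀ j t x y, |p j x t - p j y t| ≤ C * (|x - y| + 1 / N j) := fun j t x y =>
    pap_x (hN j) hC.le (hSV j) t x y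
  have htay : ∀ j t x y, x ≤ y →
      |u j y t - u j x t - (y - x) * p j x t| ≤ C * ((y - x) + 1 / N j) ^ 2 + C * (1 / N j) :=
    fun j t x y h => uap_taylor (hN j) hC.le (hSb j) (hSV j) t h
  have hpb : ∀ j x t, |p j x t| ≤ C := fun j x t => hSb j _ _
  have h00 : ∀ j, |u j 0 0| ≤ |u₀ 0| := fun j => by rw [hu00]; simp
  have hub : ∀ j, ∀ x ∈ Set.Icc (0:ℝ) 1, ∀ t, |u j x t| ≤ (|u₀ 0| + L + 2 * C) + L * |t| := by
    intro j x hx t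
    have h1 := hut j x t 0
    have h2 := hux j 0 x 0
    rw [sub_zero] at h1 h2
    have h3 : L * (|t| + 1 / N j) ≤ L * (|t| + 1) := by gcongr; exact hε1 j
    have h4 : C * (|x| + 1 / N j) ≤ C * (1 + 1) := by
      gcongr
      · rw [abs_of_nonneg hx.1]; exact hx.2
      · exact hε1 j
    have h5 : |u j x t| ≤ |u j x t - u j x 0| + |u j x 0 - u j 0 0| + |u j 0 0| := by
      have e : u j x t = (u j x t - u j x 0) + (u j x 0 - u j 0 0) + u j 0 0 := by ring
      have h6 := abs_add_le ((u j x t - u j x 0) + (u j x 0 - u j 0 0)) (u j 0 0)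
      have h7 := abs_add_le (u j x t - u j x 0) (u j x 0 - u j 0 0)
      rw [← e] at h6
      linarith
    have h6 := h00 j
    linarith
  obtain ⟨ψ, hψ, v, q, hv, hq⟩ := compact_limit (u := u) (p := p) hL.le hC.le hNt
    (fun j => by positivity) hε1 h00 hut hux htay
  have hψt := hψ.tendsto_atTop
  have hNt' : Tendsto (fun j => 1 / (N (ψ j) : ℝ)) atTop (𝓝 0) := hNt.comp hψt
  obtain ⟨hvt, hvx, hqx, hvtay, hvd⟩ := limit_props (u := fun j => u (ψ j)) (p := fun j => p (ψ j))
    hC.le hNt' (fun j => hut (ψ j)) (fun j => hux (ψ j)) (fun j => hpx (ψ j))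
    (fun j => htay (ψ j)) hv hq
  -- properties of the limit
  have hvper : ∀ x t, v (x + 1) t = v x t := fun x t =>
    tendsto_nhds_unique (hv (x + 1) t) ((hv x t).congr fun j => (uap_per (hSper (ψ j)) x t).symm)
  have hqper : ∀ x t, q (x + 1) t = q x t := fun x t =>
    tendsto_nhds_unique (hq (x + 1) t) ((hq x t).congr fun j => (pap_per (hSper (ψ j)) x t).symm)
  have hqC : ∀ x t, |q x t| ≤ C := fun x t =>
    le_of_tendsto (hq x t).abs (Eventually.of_forall fun j => hpb _ x t)
  have hq0 : ∀ x, |q x 0| ≤ R0 := fun x =>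
    le_of_tendsto (hq x 0).abs (Eventually.of_forall fun j => hp00 _ x)
  have hqm : Measurable (fun z : ℝ × ℝ => q z.1 z.2) :=
    measurable_of_tendsto_metrizable (f := fun j (z : ℝ × ℝ) => p (ψ j) z.1 z.2)
      (fun j => pap_meas) (tendsto_pi_nhds.2 fun z => hq z.1 z.2)
  have hvc : Continuous (fun z : ℝ × ℝ => v z.1 z.2) := by
    have : LipschitzWith (Real.toNNReal (L + C)) (fun z : ℝ × ℝ => v z.1 z.2) := by
      refine LipschitzWith.of_dist_le_mul fun z w => ?_
      rw [Real.coe_toNNReal _ (by positivity), Real.dist_eq]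
      have h1 := hvt z.1 z.2 w.2
      have h2 := hvx w.2 z.1 w.1
      have d1 : |z.1 - w.1| ≤ dist z w := le_max_left _ _
      have d2 : |z.2 - w.2| ≤ dist z w := le_max_right _ _
      have h3 := abs_sub_le (v z.1 z.2) (v z.1 w.2) (v w.1 w.2)
      have h4 := mul_le_mul_of_nonneg_left d1 hC.le
      have h5 := mul_le_mul_of_nonneg_left d2 hL.le
      linarith
    exact this.continuous
  have hv0 : ∀ x ∈ Set.Icc (0:ℝ) 1, v x 0 = u₀ x := by
    intro x hx
    have hu₀c : ContinuousOn u₀ (Set.Icc 0 1) := fun y hy => (hu₀d y hy).continuousAt.continuousWithinAt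
    have hpc := per_cont hu₀c hbc
    have hfl : Tendsto (fun j => (⌊(N (ψ j) : ℝ) * x⌋ : ℝ) / N (ψ j)) atTop (𝓝 x) := by
      rw [tendsto_iff_dist_tendsto_zero]
      refine squeeze_zero (fun _ => dist_nonneg) (fun j => ?_) hNt'
      have hn := hN' (ψ j)
      have h3 := Int.floor_le ((N (ψ j) : ℝ) * x)
      have h4 := Int.lt_floor_add_one ((N (ψ j) : ℝ) * x)
      rw [Real.dist_eq]
      have e2 : (⌊(N (ψ j) : ℝ) * x⌋ : ℝ) / N (ψ j) - x =
        ((⌊(N (ψ j) : ℝ) * x⌋ : ℝ) - N (ψ j) * x) / N (ψ j) := by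
        field_simp
      rw [e2, abs_div, abs_of_pos hn]
      gcongr
      rw [abs_le]; constructor <;> linarith
    have h1 := (hpc.tendsto x).comp hfl
    have h2 : v x 0 = u₀ (Int.fract x) :=
      tendsto_nhds_unique (hv x 0) (h1.congr fun j => (hu00 (ψ j) x).symm)
    rw [h2]
    rcases hx.2.eq_or_lt with h | h
    · rw [h, Int.fract_one, hbc]
    · rw [Int.fract_eq_self.2 ⟨hx.1, h⟩]
  have hqR : ∀ x, ∀ t ∈ Set.Icc (0:ℝ) T, |q x t| ≤ R := by
    intro x t ht
    have a1 := hvtay t x (x + δ) (by linarith)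
    have a2 := hvtay 0 x (x + δ) (by linarith)
    have a3 := hvt x t 0
    have a4 := hvt (x + δ) t 0
    rw [add_sub_cancel_left] at a1 a2
    rw [sub_zero, abs_of_nonneg ht.1] at a3 a4
    have a5 : L * t ≤ δ / 4 := by rw [← hTL]; exact mul_le_mul_of_nonneg_left ht.2 hL.le
    have a6 : C * δ ^ 2 = δ / 4 := by
      have : C * δ ^ 2 = (C * δ) * δ := by ring
      rw [this, hδC]; ring
    rw [a6] at a1 a2
    rw [abs_le] at a1 a2 a3 a4
    have a7 := hq0 x
    rw [abs_le] at a7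
    have a8 : δ * (q x t - q x 0) ≤ δ * 1 := by linarith [a1.1, a2.2, a3.1, a4.2]
    have a9 : δ * (-1) ≤ δ * (q x t - q x 0) := by linarith [a1.2, a2.1, a3.2, a4.1]
    have b1 := le_of_mul_le_mul_left a8 hδ
    have b2 := le_of_mul_le_mul_left a9 hδ
    rw [abs_le]; constructor <;> linarith [a7.1, a7.2]
  have hvLip : ∀ x, LipschitzWith (Real.toNNReal L) (fun t => v x t) := fun x =>
    LipschitzWith.of_dist_le_mul fun t s => by
      rw [Real.coe_toNNReal _ hL.le, Real.dist_eq, Real.dist_eq]; exact hvt x t s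
  have hqLip : ∀ t, LipschitzWith (Real.toNNReal C) (fun x => q x t) := fun t =>
    LipschitzWith.of_dist_le_mul fun x y => by
      rw [Real.coe_toNNReal _ hC.le, Real.dist_eq, Real.dist_eq]; exact hqx t x y
  have hutb : ∀ x t, |deriv (fun t' => v x t') t| ≤ L := fun x t => by
    have := norm_deriv_le_of_lipschitz (x₀ := t) (hvLip x)
    rwa [Real.coe_toNNReal _ hL.le] at this
  have huxxb : ∀ x t, |deriv (fun x' => q x' t) x| ≤ C := fun x t => by
    have := norm_deriv_le_of_lipschitz (x₀ := x) (hqLip t)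
    rwa [Real.coe_toNNReal _ hC.le] at this
  obtain ⟨B, hB⟩ := (isCompact_Icc.prod isCompact_Icc :
    IsCompact (Set.Icc (0:ℝ) 1 ×ˢ Set.Icc 0 T)).exists_bound_of_continuousOn hvc.continuousOn
  refine ⟨v, fun x t => deriv (fun t' => v x t') t, q, fun x t => deriv (fun x' => q x' t) x,
    L, max B C, ⟨fun x _ t _ s _ => hvt x t s, ?_, ?_, ?_⟩, hv0⟩
  · intro x _
    filter_upwards [ae_restrict_of_ae (hvLip x).ae_differentiableAt_real] with t ht
    exact ⟨ht.hasDerivAt, hutb x t⟩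
  · filter_upwards [ae_restrict_mem measurableSet_Icc] with t ht
    refine ⟨fun x hx => ⟨hvd t x, (hB (x, t) ⟨hx, ht⟩).trans (le_max_left _ _),
      (hqC x t).trans (le_max_right _ _), (huxxb x t).trans (le_max_right _ _)⟩, ?_, ?_, ?_⟩
    · filter_upwards [ae_restrict_of_ae (hqLip t).ae_differentiableAt_real] with x hx
      exact hx.hasDerivAt
    · have h1 := hvper 0 t
      have h2 := hvper 0 0
      rw [zero_add] at h1 h2
      rw [h1, h2]
    · have h1 := hqper 0 t
      rw [zero_add] at h1
      exact h1.symm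
  · intro φ hφ
    refine weak_final hT hR hC.le hφ hgm hg hL.le hvt hvc hqm hqC hqR hutb ?_
    exact weak_limit (N := fun j => N (ψ j)) (G := fun j => G (ψ j)) (U0 := fun j => U0 (ψ j))
      (B0 := |u₀ 0| + L + 2 * C) (B1 := L) (M := M) (C := C)
      hR hC.le hM.le (by positivity) hL.le (fun j => hN _) hNt' (fun j => hG _)
      (fun j => hSper _) (fun j => hpb _) (fun j => hub _) hv hq
      (cav_tendsto hgm hg (fun j => hN _) hNt') hφ

theorem statement17
    (u₀ u₀' : ℝ → ℝ) (K₀ : ℝ)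
    (hu₀d : ∀ x ∈ Set.Icc (0:ℝ) 1, HasDerivAt u₀ (u₀' x) x)
    (hu₀lip : LipschitzOnWith (Real.toNNReal K₀) u₀' (Set.Icc (0:ℝ) 1))
    (hbc : u₀ 0 = u₀ 1) (hbc' : u₀' 0 = u₀' 1)
    (M : ℝ) (hM : 0 < M) :
    ∃ T > (0:ℝ), ∀ g : ℝ → ℝ, Measurable g → (∀ x, |g x| ≤ M) →
      ∃ (u ut ux uxx : ℝ → ℝ → ℝ) (L M' : ℝ),
        IsWeakSol g T u ut ux uxx L M' ∧ ∀ x ∈ Set.Icc (0:ℝ) 1, u x 0 = u₀ x := by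
  exact main_result u₀ u₀' K₀ hu₀d hu₀lip hbc hbc' M hM
end
end
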